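/- arXiv:math/0211349 — 2 statements merged into one kernel-verified Lean document; each statement's English description precedes it below -/
import Mathlib

section
/- Let g be a smooth Riemannian metric on Ω and let V = (V_i) be a smooth 1-form on Ω satisfying the gradient Ricci soliton equation: ∇_i V_j = ∇_j V_i and R_{ij} = ∇_i V_j for all 1 ≤ i,j ≤ n. Then for every 1 ≤ j ≤ n, ½ ∂_j R + R_{jk} g^{kl} V_l = 0 on Ω. -/
/- Static local-coordinate Riemannian geometry on an open set `Ω ⊆ ℝⁿ`. -/

noncomputable section
open scoped BigOperators

namespace CCS

/-- A (static) scalar field on `ℝⁿ`. -/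
abbrev SFld (n : ℕ) := (Fin n → ℝ) → ℝ

/-- A (static) 2-tensor field in local coordinates. -/
abbrev SMet (n : ℕ) := Fin n → Fin n → SFld n

variable {n : ℕ}

/-- Partial derivative `∂ᵢ`. -/
def spd (i : Fin n) (u : SFld n) : SFld n :=
  fun x => fderiv ℝ u x (Pi.single i 1)

/-- Christoffel symbols `Γ^k_{ij} = ½ g^{kl}(∂ᵢg_{jl} + ∂ⱼg_{il} − ∂ₗg_{ij})`. -/
def Gamma (g ginv : SMet n) (k i j : Fin n) : SFld n :=
  fun x => (1/2) * ∑ l, ginv k l x *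
    (spd i (g j l) x + spd j (g i l) x - spd l (g i j) x)

/-- Riemann curvature `R^l_{ijk}`. -/
def Riem (g ginv : SMet n) (l i j k : Fin n) : SFld n :=
  fun x => spd i (Gamma g ginv l j k) x - spd j (Gamma g ginv l i k) x
    + ∑ m, (Gamma g ginv m j k x * Gamma g ginv l i m x
          - Gamma g ginv m i k x * Gamma g ginv l j m x)

/-- Ricci curvature `R_{jk} = R^p_{pjk}`. -/
def Ric (g ginv : SMet n) (j k : Fin n) : SFld n :=
  fun x => ∑ p, Riem g ginv p p j k x

/-- Scalar curvature `R = g^{jk}R_{jk}`. -/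
def Scal (g ginv : SMet n) : SFld n :=
  fun x => ∑ j, ∑ k, ginv j k x * Ric g ginv j k x

/-- Covariant derivative of a 1-form: `∇ᵢω_j = ∂ᵢω_j − Γ^p_{ij}ω_p`. -/
def cd1 (g ginv : SMet n) (i : Fin n) (ω : Fin n → SFld n) (j : Fin n) : SFld n :=
  fun x => spd i (ω j) x - ∑ p, Gamma g ginv p i j x * ω p x

end CCS

namespace CCS

set_option linter.unusedSectionVars false

open Matrix

section helpers

variable {n : ℕ} {ι κ τ : Type} [Fintype ι] [Fintype κ] [Fintype τ]

/-- Entrywise partial derivative of a matrix field. -/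
def Dm (i : Fin n) (M : (Fin n → ℝ) → Matrix ι κ ℝ) : (Fin n → ℝ) → Matrix ι κ ℝ :=
  fun x => Matrix.of fun a b => spd i (fun y => M y a b) x

/-- Entrywise smoothness. -/
def Sm (S : Set (Fin n → ℝ)) (M : (Fin n → ℝ) → Matrix ι κ ℝ) : Prop :=
  ∀ a b, ContDiffOn ℝ (⊤ : ℕ∞) (fun y => M y a b) S

theorem sm_diff {S : Set (Fin n → ℝ)} (hS : IsOpen S) {f : SFld n}
    (hf : ContDiffOn ℝ (⊤ : ℕ∞) f S) {x} (hx : x ∈ S) : DifferentiableAt ℝ f x :=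
  ((hf.contDiffAt (hS.mem_nhds hx)).differentiableAt (by simp))

theorem sm_spd {S : Set (Fin n → ℝ)} (hS : IsOpen S) {f : SFld n}
    (hf : ContDiffOn ℝ (⊤ : ℕ∞) f S) (i : Fin n) : ContDiffOn ℝ (⊤ : ℕ∞) (spd i f) S := by
  have h := hf.fderiv_of_isOpen (m := (⊤ : ℕ∞)) hS (by simp)
  exact h.clm_apply contDiffOn_const

theorem spd_congr {S : Set (Fin n → ℝ)} (hS : IsOpen S) {f h : SFld n}
    (hfh : ∀ x ∈ S, f x = h x) (i : Fin n) {x} (hx : x ∈ S) : spd i f x = spd i h x := by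
  unfold spd
  have : f =ᶠ[nhds x] h := by
    filter_upwards [hS.mem_nhds hx] with y hy using hfh y hy
  rw [this.fderiv_eq]

theorem spd_mul {f h : SFld n} {x} (hf : DifferentiableAt ℝ f x) (hh : DifferentiableAt ℝ h x)
    (i : Fin n) : spd i (fun y => f y * h y) x = spd i f x * h x + f x * spd i h x := by
  unfold spd
  rw [fderiv_fun_mul hf hh]
  simp
  ring

theorem spd_add {f h : SFld n} {x} (hf : DifferentiableAt ℝ f x) (hh : DifferentiableAt ℝ h x)
    (i : Fin n) : spd i (fun y => f y + h y) x = spd i f x + spd i h x := by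
  unfold spd
  rw [fderiv_fun_add hf hh]
  simp

theorem spd_sub {f h : SFld n} {x} (hf : DifferentiableAt ℝ f x) (hh : DifferentiableAt ℝ h x)
    (i : Fin n) : spd i (fun y => f y - h y) x = spd i f x - spd i h x := by
  unfold spd
  rw [fderiv_fun_sub hf hh]
  simp

theorem spd_sum {f : κ → SFld n} {x} (hf : ∀ k, DifferentiableAt ℝ (f k) x)
    (i : Fin n) : spd i (fun y => ∑ k, f k y) x = ∑ k, spd i (f k) x := by
  unfold spd
  rw [fderiv_fun_sum (fun k _ => hf k)]
  simp

theorem spd_comm {S : Set (Fin n → ℝ)} (hS : IsOpen S) {f : SFld n}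
    (hf : ContDiffOn ℝ (⊤ : ℕ∞) f S) (i j : Fin n) {x} (hx : x ∈ S) :
    spd i (spd j f) x = spd j (spd i f) x := by
  have hc := hf.contDiffAt (hS.mem_nhds hx)
  have h := (hc.isSymmSndFDerivAt (by rw [minSmoothness_of_isRCLikeNormedField]; exact WithTop.coe_le_coe.mpr (le_top : (2 : ℕ∞) ≤ ⊤))).eq (Pi.single i 1) (Pi.single j 1)
  have hd : DifferentiableAt ℝ (fderiv ℝ f) x :=
    (hc.fderiv_right (m := (⊤ : ℕ∞)) (by simp)).differentiableAt (by simp)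
  have key : ∀ i j : Fin n, spd i (spd j f) x
      = fderiv ℝ (fderiv ℝ f) x (Pi.single i 1) (Pi.single j 1) := by
    intro i j
    unfold spd
    rw [fderiv_clm_apply hd (differentiableAt_const _)]
    simp
  rw [key, key, h]

variable {S : Set (Fin n → ℝ)}

theorem Sm.mul {M : (Fin n → ℝ) → Matrix ι κ ℝ} {N : (Fin n → ℝ) → Matrix κ τ ℝ}
    (hM : Sm S M) (hN : Sm S N) : Sm S (fun y => M y * N y) := by
  intro a b
  simp only [Matrix.mul_apply]
  exact ContDiffOn.sum fun k _ => (hM a k).mul (hN k b)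

theorem Sm.add {M N : (Fin n → ℝ) → Matrix ι κ ℝ}
    (hM : Sm S M) (hN : Sm S N) : Sm S (fun y => M y + N y) :=
  fun a b => (hM a b).add (hN a b)

theorem Sm.sub {M N : (Fin n → ℝ) → Matrix ι κ ℝ}
    (hM : Sm S M) (hN : Sm S N) : Sm S (fun y => M y - N y) :=
  fun a b => (hM a b).sub (hN a b)

theorem Sm.tr {M : (Fin n → ℝ) → Matrix ι κ ℝ} (hM : Sm S M) : Sm S (fun y => (M y)ᵀ) :=
  fun a b => hM b a

theorem Sm.Dm {M : (Fin n → ℝ) → Matrix ι κ ℝ} (hS : IsOpen S) (hM : Sm S M) (i : Fin n) :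
    Sm S (Dm i M) :=
  fun a b => sm_spd hS (hM a b) i

theorem Dm_mul {M : (Fin n → ℝ) → Matrix ι κ ℝ} {N : (Fin n → ℝ) → Matrix κ τ ℝ}
    (hS : IsOpen S) (hM : Sm S M) (hN : Sm S N) (i : Fin n) {x} (hx : x ∈ S) :
    Dm i (fun y => M y * N y) x = Dm i M x * N x + M x * Dm i N x := by
  ext a b
  simp only [Dm, Matrix.mul_apply, Matrix.add_apply, Matrix.of_apply]
  rw [spd_sum (f := fun k y => M y a k * N y k b)
    (fun k => (sm_diff hS (hM a k) hx).mul (sm_diff hS (hN k b) hx)), ← Finset.sum_add_distrib]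
  exact Finset.sum_congr rfl fun k _ => spd_mul (sm_diff hS (hM a k) hx) (sm_diff hS (hN k b) hx) i

theorem Dm_add {M N : (Fin n → ℝ) → Matrix ι κ ℝ}
    (hS : IsOpen S) (hM : Sm S M) (hN : Sm S N) (i : Fin n) {x} (hx : x ∈ S) :
    Dm i (fun y => M y + N y) x = Dm i M x + Dm i N x := by
  ext a b
  exact spd_add (sm_diff hS (hM a b) hx) (sm_diff hS (hN a b) hx) i

theorem Dm_sub {M N : (Fin n → ℝ) → Matrix ι κ ℝ}
    (hS : IsOpen S) (hM : Sm S M) (hN : Sm S N) (i : Fin n) {x} (hx : x ∈ S) :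
    Dm i (fun y => M y - N y) x = Dm i M x - Dm i N x := by
  ext a b
  exact spd_sub (sm_diff hS (hM a b) hx) (sm_diff hS (hN a b) hx) i

theorem Dm_tr (M : (Fin n → ℝ) → Matrix ι κ ℝ) (i : Fin n) (x) :
    Dm i (fun y => (M y)ᵀ) x = (Dm i M x)ᵀ := rfl

theorem Dm_congr {M N : (Fin n → ℝ) → Matrix ι κ ℝ} (hS : IsOpen S)
    (h : ∀ x ∈ S, M x = N x) (i : Fin n) {x} (hx : x ∈ S) : Dm i M x = Dm i N x := by
  ext a b
  exact spd_congr hS (fun y hy => by rw [h y hy]) i hx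

theorem Dm_comm {M : (Fin n → ℝ) → Matrix ι κ ℝ} (hS : IsOpen S) (hM : Sm S M)
    (i j : Fin n) {x} (hx : x ∈ S) : Dm i (Dm j M) x = Dm j (Dm i M) x := by
  ext a b
  exact spd_comm hS (hM a b) i j hx

theorem Dm_const (C : Matrix ι κ ℝ) (i : Fin n) (x) : Dm i (fun _ => C) x = 0 := by
  ext a b
  simp [Dm, spd]

theorem Sm.det [DecidableEq ι] {M : (Fin n → ℝ) → Matrix ι ι ℝ} (hM : Sm S M) :
    ContDiffOn ℝ (⊤ : ℕ∞) (fun y => (M y).det) S := by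
  simp only [Matrix.det_apply]
  exact ContDiffOn.sum fun σ _ => (contDiffOn_prod fun i _ => hM _ _).const_smul _

theorem Sm.inv [DecidableEq ι] {G H : (Fin n → ℝ) → Matrix ι ι ℝ} (hG : Sm S G)
    (h : ∀ x ∈ S, G x * H x = 1) : Sm S H := by
  have hdet : ∀ x ∈ S, (G x).det ≠ 0 := fun x hx h0 => by
    have := congrArg Matrix.det (h x hx)
    simp [h0] at this
  intro a b
  have h1 : ContDiffOn ℝ (⊤ : ℕ∞) (fun y => ((G y).det)⁻¹ * (G y).adjugate a b) S := by
    refine (hG.det.inv hdet).mul ?_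
    simp only [Matrix.adjugate_apply]
    apply Sm.det (M := fun y => (G y).updateRow b (Pi.single a 1))
    intro c d
    by_cases hc : c = b
    · subst hc
      simp only [Matrix.updateRow_self]
      exact contDiffOn_const
    · simp only [Matrix.updateRow_ne hc]
      exact hG c d
  refine h1.congr fun x hx => ?_
  rw [← Matrix.inv_eq_right_inv (h x hx), Matrix.inv_def]
  simp

/-- curvature matrix -/
def Fm (Γ : Fin n → (Fin n → ℝ) → Matrix ι ι ℝ) (i j : Fin n) : (Fin n → ℝ) → Matrix ι ι ℝ :=
  fun x => Dm i (Γ j) x - Dm j (Γ i) x + (Γ i x * Γ j x - Γ j x * Γ i x)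

theorem Sm.Fm {Γ : Fin n → (Fin n → ℝ) → Matrix ι ι ℝ} (hS : IsOpen S) (h : ∀ i, Sm S (Γ i))
    (i j : Fin n) : Sm S (Fm Γ i j) :=
  (((h j).Dm hS i).sub ((h i).Dm hS j)).add (((h i).mul (h j)).sub ((h j).mul (h i)))

theorem Dm_Fm {Γ : Fin n → (Fin n → ℝ) → Matrix ι ι ℝ} (hS : IsOpen S) (h : ∀ i, Sm S (Γ i))
    (k i j : Fin n) {x} (hx : x ∈ S) : Dm k (Fm Γ i j) x =
      Dm k (Dm i (Γ j)) x - Dm k (Dm j (Γ i)) x +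
      ((Dm k (Γ i) x * Γ j x + Γ i x * Dm k (Γ j) x)
        - (Dm k (Γ j) x * Γ i x + Γ j x * Dm k (Γ i) x)) := by
  unfold Fm
  rw [Dm_add hS (((h j).Dm hS i).sub ((h i).Dm hS j)) (((h i).mul (h j)).sub ((h j).mul (h i))) k hx,
    Dm_sub hS ((h j).Dm hS i) ((h i).Dm hS j) k hx,
    Dm_sub hS ((h i).mul (h j)) ((h j).mul (h i)) k hx,
    Dm_mul hS (h i) (h j) k hx, Dm_mul hS (h j) (h i) k hx]

/-- second Bianchi -/
theorem bianchi {Γ : Fin n → (Fin n → ℝ) → Matrix ι ι ℝ} (hS : IsOpen S) (h : ∀ i, Sm S (Γ i))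
    (k i j : Fin n) {x} (hx : x ∈ S) :
    (Dm k (Fm Γ i j) x + Γ k x * Fm Γ i j x - Fm Γ i j x * Γ k x)
    + (Dm i (Fm Γ j k) x + Γ i x * Fm Γ j k x - Fm Γ j k x * Γ i x)
    + (Dm j (Fm Γ k i) x + Γ j x * Fm Γ k i x - Fm Γ k i x * Γ j x) = 0 := by
  rw [Dm_Fm hS h k i j hx, Dm_Fm hS h i j k hx, Dm_Fm hS h j k i hx,
    Dm_comm hS (h j) k i hx, Dm_comm hS (h i) k j hx, Dm_comm hS (h k) i j hx]
  unfold Fm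
  noncomm_ring

theorem Fm_swap (Γ : Fin n → (Fin n → ℝ) → Matrix ι ι ℝ) (i j : Fin n) (x) :
    Fm Γ i j x = - Fm Γ j i x := by
  unfold Fm
  noncomm_ring

/-- metric compatibility gives antisymmetry -/
theorem Fm_anti {G : (Fin n → ℝ) → Matrix ι ι ℝ} {Γ : Fin n → (Fin n → ℝ) → Matrix ι ι ℝ}
    (hS : IsOpen S) (hG : Sm S G) (h : ∀ i, Sm S (Γ i))
    (hc : ∀ i, ∀ x ∈ S, Dm i G x = (Γ i x)ᵀ * G x + G x * Γ i x)
    (i j : Fin n) {x} (hx : x ∈ S) : (Fm Γ i j x)ᵀ * G x + G x * Fm Γ i j x = 0 := by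
  have key : ∀ i j : Fin n, Dm i (Dm j G) x =
      (Dm i (Γ j) x)ᵀ * G x + (Γ j x)ᵀ * ((Γ i x)ᵀ * G x + G x * Γ i x)
      + (((Γ i x)ᵀ * G x + G x * Γ i x) * Γ j x + G x * Dm i (Γ j) x) := by
    intro i j
    rw [Dm_congr hS (hc j) i hx, Dm_add hS ((h j).tr.mul hG) (hG.mul (h j)) i hx,
      Dm_mul hS (h j).tr hG i hx, Dm_mul hS hG (h j) i hx, Dm_tr, hc i x hx]
  have h2 := Dm_comm hS hG i j hx
  rw [key, key, ← sub_eq_zero] at h2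
  rw [← h2]
  unfold Fm
  simp only [Matrix.transpose_add, Matrix.transpose_sub, Matrix.transpose_mul]
  noncomm_ring

theorem Dm_inv [DecidableEq ι] {G H : (Fin n → ℝ) → Matrix ι ι ℝ}
    {Γ : Fin n → (Fin n → ℝ) → Matrix ι ι ℝ}
    (hS : IsOpen S) (hG : Sm S G)
    (hc : ∀ i, ∀ x ∈ S, Dm i G x = (Γ i x)ᵀ * G x + G x * Γ i x)
    (hGH : ∀ x ∈ S, G x * H x = 1)
    (i : Fin n) {x} (hx : x ∈ S) : Dm i H x = - (H x * (Γ i x)ᵀ) - Γ i x * H x := by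
  have hH := hG.inv hGH
  have hHG : H x * G x = 1 := mul_eq_one_comm.mp (hGH x hx)
  have h1 := Dm_congr hS hGH i hx
  rw [Dm_const, Dm_mul hS hG hH i hx, hc i x hx] at h1
  have h2 : H x * (((Γ i x)ᵀ * G x + G x * Γ i x) * H x + G x * Dm i H x) = 0 := by
    rw [h1, Matrix.mul_zero]
  have h3 : H x * (((Γ i x)ᵀ * G x + G x * Γ i x) * H x + G x * Dm i H x)
      = H x * (Γ i x)ᵀ * (G x * H x) + (H x * G x) * Γ i x * H x + (H x * G x) * Dm i H x := by
    noncomm_ring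
  rw [h3, hHG, hGH x hx] at h2
  rw [← sub_eq_zero, ← h2]
  noncomm_ring

/-- Bianchi for the raised curvature `A = F H`. -/
theorem bianchi_raised [DecidableEq ι] {G H : (Fin n → ℝ) → Matrix ι ι ℝ}
    {Γ : Fin n → (Fin n → ℝ) → Matrix ι ι ℝ}
    (hS : IsOpen S) (hG : Sm S G) (h : ∀ i, Sm S (Γ i))
    (hc : ∀ i, ∀ x ∈ S, Dm i G x = (Γ i x)ᵀ * G x + G x * Γ i x)
    (hGH : ∀ x ∈ S, G x * H x = 1) (k i j : Fin n) {x} (hx : x ∈ S) :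
    (Dm k (fun y => Fm Γ i j y * H y) x + Γ k x * (Fm Γ i j x * H x) + (Fm Γ i j x * H x) * (Γ k x)ᵀ)
    + (Dm i (fun y => Fm Γ j k y * H y) x + Γ i x * (Fm Γ j k x * H x) + (Fm Γ j k x * H x) * (Γ i x)ᵀ)
    + (Dm j (fun y => Fm Γ k i y * H y) x + Γ j x * (Fm Γ k i x * H x) + (Fm Γ k i x * H x) * (Γ j x)ᵀ)
     = 0 := by
  have hH := hG.inv hGH
  have hb := congrArg (· * H x) (bianchi hS h k i j hx)
  simp only [Matrix.zero_mul] at hb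
  rw [Dm_mul hS (Sm.Fm hS h i j) hH k hx, Dm_mul hS (Sm.Fm hS h j k) hH i hx,
    Dm_mul hS (Sm.Fm hS h k i) hH j hx, Dm_inv hS hG hc hGH k hx, Dm_inv hS hG hc hGH i hx,
    Dm_inv hS hG hc hGH j hx, ← hb]
  noncomm_ring

theorem raised_anti [DecidableEq ι] {G H : (Fin n → ℝ) → Matrix ι ι ℝ}
    {Γ : Fin n → (Fin n → ℝ) → Matrix ι ι ℝ}
    (hS : IsOpen S) (hG : Sm S G) (h : ∀ i, Sm S (Γ i))
    (hc : ∀ i, ∀ x ∈ S, Dm i G x = (Γ i x)ᵀ * G x + G x * Γ i x)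
    (hsym : ∀ x ∈ S, (G x)ᵀ = G x)
    (hGH : ∀ x ∈ S, G x * H x = 1) (i j : Fin n) {x} (hx : x ∈ S) :
    (Fm Γ i j x * H x)ᵀ = - (Fm Γ i j x * H x) := by
  have hHG : H x * G x = 1 := mul_eq_one_comm.mp (hGH x hx)
  have hHs : (H x)ᵀ = H x := by
    rw [← Matrix.inv_eq_right_inv (hGH x hx), Matrix.transpose_nonsing_inv, hsym x hx]
  have h1 := Fm_anti hS hG h hc i j hx
  have h2 : H x * ((Fm Γ i j x)ᵀ * G x + G x * Fm Γ i j x) * H x = 0 := by rw [h1]; simp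
  have h3 : H x * ((Fm Γ i j x)ᵀ * G x + G x * Fm Γ i j x) * H x
    = H x * (Fm Γ i j x)ᵀ * (G x * H x) + (H x * G x) * Fm Γ i j x * H x := by noncomm_ring
  rw [h3, hHG, hGH x hx] at h2
  rw [Matrix.transpose_mul, hHs, eq_neg_iff_add_eq_zero, ← h2]
  noncomm_ring

/-- Ricci commutation for a vector field `W`. -/
theorem commut {Γ : Fin n → (Fin n → ℝ) → Matrix ι ι ℝ} (hS : IsOpen S) (h : ∀ i, Sm S (Γ i))
    {W : (Fin n → ℝ) → Matrix ι κ ℝ} (hW : Sm S W) {P : Fin n → (Fin n → ℝ) → Matrix ι κ ℝ}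
    (hP : ∀ i, ∀ x ∈ S, P i x = Dm i W x + Γ i x * W x) (i j : Fin n) {x} (hx : x ∈ S) :
    Dm i (P j) x + Γ i x * P j x - (Dm j (P i) x + Γ j x * P i x) = Fm Γ i j x * W x := by
  have key : ∀ i j, Dm i (P j) x = Dm i (Dm j W) x + (Dm i (Γ j) x * W x + Γ j x * Dm i W x) := by
    intro i j
    rw [Dm_congr hS (hP j) i hx, Dm_add hS (hW.Dm hS j) ((h j).mul hW) i hx,
      Dm_mul hS (h j) hW i hx]
  rw [key, key, Dm_comm hS hW i j hx, hP i x hx, hP j x hx]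
  unfold Fm
  simp only [Matrix.add_mul, Matrix.sub_mul, Matrix.mul_add, Matrix.mul_assoc]
  abel

/-- Algebraic contraction of the second Bianchi identity. -/
theorem contract (dA : Fin n → Fin n → Fin n → Fin n → Fin n → ℝ)
    (A : Fin n → Fin n → Fin n → Fin n → ℝ) (Γ : Fin n → Fin n → Fin n → ℝ)
    (hA1 : ∀ i j l k, A i j l k = - A j i l k) (hA2 : ∀ i j l k, A i j l k = - A i j k l)
    (hd1 : ∀ a i j l k, dA a i j l k = - dA a j i l k)
    (hd2 : ∀ a i j l k, dA a i j l k = - dA a i j k l)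
    (hΓ : ∀ a l k, Γ a l k = Γ k l a)
    (hB : ∀ a i j l k,
      (dA a i j l k + ∑ p, Γ a l p * A i j p k + ∑ p, A i j l p * Γ a k p)
      + (dA i j a l k + ∑ p, Γ i l p * A j a p k + ∑ p, A j a l p * Γ i k p)
      + (dA j a i l k + ∑ p, Γ j l p * A a i p k + ∑ p, A a i l p * Γ j k p) = 0) (a : Fin n) :
    ∑ i, ∑ j, dA a i j i j = 2 * (∑ i, ∑ p, dA i p a p i)
      + 2 * (∑ i, ∑ m, Γ i i m * ∑ p, A p a p m) - 2 * ∑ i, ∑ m, Γ a i m * ∑ p, A p i p m := by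
  have h0 : ∑ i, ∑ j, ((dA a i j i j + ∑ p, Γ a i p * A i j p j + ∑ p, A i j i p * Γ a j p)
      + (dA i j a i j + ∑ p, Γ i i p * A j a p j + ∑ p, A j a i p * Γ i j p)
      + (dA j a i i j + ∑ p, Γ j i p * A a i p j + ∑ p, A a i i p * Γ j j p)) = 0 :=
    Finset.sum_eq_zero fun i _ => Finset.sum_eq_zero fun j _ => hB a i j i j
  simp only [Finset.sum_add_distrib] at h0
  have t2 : ∑ i, ∑ j, ∑ p, Γ a i p * A i j p j = ∑ i, ∑ m, Γ a i m * ∑ p, A p i p m := by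
    refine Finset.sum_congr rfl fun i _ => ?_
    rw [Finset.sum_comm]
    refine Finset.sum_congr rfl fun m _ => ?_
    rw [Finset.mul_sum]
    refine Finset.sum_congr rfl fun p _ => ?_
    rw [hA1 i p, hA2 p i, neg_neg]
  have t3 : ∑ i, ∑ j, ∑ p, A i j i p * Γ a j p = ∑ i, ∑ m, Γ a i m * ∑ p, A p i p m := by
    rw [Finset.sum_comm]
    refine Finset.sum_congr rfl fun i _ => ?_
    rw [Finset.sum_comm]
    refine Finset.sum_congr rfl fun m _ => ?_
    rw [Finset.mul_sum]
    exact Finset.sum_congr rfl fun p _ => mul_comm _ _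
  have t4 : ∑ i, ∑ j, dA i j a i j = - ∑ i, ∑ p, dA i p a p i := by
    simp only [← Finset.sum_neg_distrib]
    exact Finset.sum_congr rfl fun i _ => Finset.sum_congr rfl fun j _ => hd2 _ _ _ _ _
  have t5 : ∑ i, ∑ j, ∑ p, Γ i i p * A j a p j = - ∑ i, ∑ m, Γ i i m * ∑ p, A p a p m := by
    simp only [← Finset.sum_neg_distrib]
    refine Finset.sum_congr rfl fun i _ => ?_
    rw [Finset.sum_comm]
    refine Finset.sum_congr rfl fun m _ => ?_
    rw [Finset.mul_sum, ← Finset.sum_neg_distrib]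
    refine Finset.sum_congr rfl fun p _ => ?_
    rw [hA2 p a m p]
    ring
  have t6 : ∑ i, ∑ j, ∑ p, A j a i p * Γ i j p = 0 := by
    rw [Finset.sum_comm]
    refine Finset.sum_eq_zero fun j _ => ?_
    have : ∑ i, ∑ p, A j a i p * Γ i j p = - ∑ i, ∑ p, A j a i p * Γ i j p := by
      conv_lhs => rw [Finset.sum_comm]
      simp only [← Finset.sum_neg_distrib]
      refine Finset.sum_congr rfl fun i _ => Finset.sum_congr rfl fun p _ => ?_
      rw [hA2 j a p i, hΓ p j i]
      ring
    linarith
  have t7 : ∑ i, ∑ j, dA j a i i j = - ∑ i, ∑ p, dA i p a p i := by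
    rw [Finset.sum_comm]
    simp only [← Finset.sum_neg_distrib]
    exact Finset.sum_congr rfl fun i _ => Finset.sum_congr rfl fun j _ => hd1 _ _ _ _ _
  have t8 : ∑ i, ∑ j, ∑ p, Γ j i p * A a i p j = 0 := by
    refine Finset.sum_eq_zero fun i _ => ?_
    have : ∑ j, ∑ p, Γ j i p * A a i p j = - ∑ j, ∑ p, Γ j i p * A a i p j := by
      conv_lhs => rw [Finset.sum_comm]
      simp only [← Finset.sum_neg_distrib]
      refine Finset.sum_congr rfl fun j _ => Finset.sum_congr rfl fun p _ => ?_
      rw [hA2 a i j p, hΓ p i j]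
      ring
    linarith
  have t9 : ∑ i, ∑ j, ∑ p, A a i i p * Γ j j p = - ∑ i, ∑ m, Γ i i m * ∑ p, A p a p m := by
    rw [Finset.sum_comm]
    simp only [← Finset.sum_neg_distrib]
    refine Finset.sum_congr rfl fun i _ => ?_
    rw [Finset.sum_comm]
    refine Finset.sum_congr rfl fun m _ => ?_
    rw [Finset.mul_sum, ← Finset.sum_neg_distrib]
    refine Finset.sum_congr rfl fun p _ => ?_
    rw [hA1 a p p m]
    ring
  rw [t2, t3, t4, t5, t6, t7, t8, t9] at h0
  linarith

end helpers

end CCS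

/-- equation (2.16) of Chow–Chu. If `(g, V)` satisfies the
gradient Ricci soliton equation `∇ᵢVⱼ = ∇ⱼVᵢ`, `R_{ij} = ∇ᵢVⱼ` on `Ω`,
then `½ ∂ⱼR + R_{jk} g^{kl} V_l = 0` on `Ω`. -/
theorem soliton_identity (n : ℕ) (hn : 2 ≤ n) (Ωs : Set (Fin n → ℝ))
    (hΩ : IsOpen Ωs) (hconn : IsConnected Ωs)
    (g ginv : CCS.SMet n)
    (hsm : ∀ i j, ContDiffOn ℝ (⊤ : ℕ∞) (g i j) Ωs)
    (hsym : ∀ x ∈ Ωs, ∀ i j, g i j x = g j i x)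
    (hpos : ∀ x ∈ Ωs, ∀ v : Fin n → ℝ, v ≠ 0 → 0 < ∑ i, ∑ j, g i j x * v i * v j)
    (hinv : ∀ x ∈ Ωs, ∀ i j, ∑ k, g i k x * ginv k j x = (if i = j then (1:ℝ) else 0))
    (V : Fin n → CCS.SFld n) (hVsm : ∀ j, ContDiffOn ℝ (⊤ : ℕ∞) (V j) Ωs)
    (hclosed : ∀ x ∈ Ωs, ∀ i j, CCS.cd1 g ginv i V j x = CCS.cd1 g ginv j V i x)
    (hsoliton : ∀ x ∈ Ωs, ∀ i j, CCS.Ric g ginv i j x = CCS.cd1 g ginv i V j x) :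
    ∀ x ∈ Ωs, ∀ j : Fin n,
      (1/2) * CCS.spd j (CCS.Scal g ginv) x
      + ∑ k, ∑ l, CCS.Ric g ginv j k x * ginv k l x * V l x = 0 := by
  classical
  let G : (Fin n → ℝ) → Matrix (Fin n) (Fin n) ℝ := fun y => Matrix.of fun i j => g i j y
  let H : (Fin n → ℝ) → Matrix (Fin n) (Fin n) ℝ := fun y => Matrix.of fun i j => ginv i j y
  let Γ : Fin n → (Fin n → ℝ) → Matrix (Fin n) (Fin n) ℝ :=
    fun i y => Matrix.of fun l k => CCS.Gamma g ginv l i k y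
  have hG : CCS.Sm Ωs G := fun a b => hsm a b
  have hGH : ∀ x ∈ Ωs, G x * H x = 1 := by
    intro x hx
    ext i j
    rw [Matrix.mul_apply, Matrix.one_apply]
    exact hinv x hx i j
  have hH : CCS.Sm Ωs H := hG.inv hGH
  have hGs : ∀ x ∈ Ωs, (G x).transpose = G x := by
    intro x hx
    ext i j
    exact hsym x hx j i
  have hHs : ∀ x ∈ Ωs, ∀ i j, H x i j = H x j i := by
    intro x hx i j
    have : (H x).transpose = H x := by
      rw [← Matrix.inv_eq_right_inv (hGH x hx), Matrix.transpose_nonsing_inv, hGs x hx]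
    exact (congrFun (congrFun this i) j).symm
  have hds : ∀ k, ∀ x ∈ Ωs, ∀ i j, CCS.spd k (g i j) x = CCS.spd k (g j i) x :=
    fun k x hx i j => CCS.spd_congr hΩ (fun y hy => hsym y hy i j) k hx
  have hΓ : ∀ i, CCS.Sm Ωs (Γ i) := by
    intro i l k
    change ContDiffOn ℝ (⊤ : ℕ∞) (CCS.Gamma g ginv l i k) Ωs
    unfold CCS.Gamma
    refine contDiffOn_const.mul (ContDiffOn.sum fun m _ => (hH l m).mul ?_)
    exact ((CCS.sm_spd hΩ (hsm _ _) _).add (CCS.sm_spd hΩ (hsm _ _) _)).sub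
      (CCS.sm_spd hΩ (hsm _ _) _)
  have htor : ∀ x ∈ Ωs, ∀ a l k, Γ a x l k = Γ k x l a := by
    intro x hx a l k
    change CCS.Gamma g ginv l a k x = CCS.Gamma g ginv l k a x
    unfold CCS.Gamma
    congr 1
    refine Finset.sum_congr rfl fun m _ => ?_
    rw [hds m x hx a k]
    ring
  have hGΓ : ∀ x ∈ Ωs, ∀ i j k, (G x * Γ i x) j k =
      (1/2) * (CCS.spd i (g k j) x + CCS.spd k (g i j) x - CCS.spd j (g i k) x) := by
    intro x hx i j k
    have h1 : Γ i x = H x * Matrix.of (fun m k =>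
      (1/2) * (CCS.spd i (g k m) x + CCS.spd k (g i m) x - CCS.spd m (g i k) x)) := by
      ext l k
      rw [Matrix.mul_apply]
      change CCS.Gamma g ginv l i k x = ∑ m, ginv l m x * ((1/2) * (CCS.spd i (g k m) x
        + CCS.spd k (g i m) x - CCS.spd m (g i k) x))
      unfold CCS.Gamma
      rw [Finset.mul_sum]
      exact Finset.sum_congr rfl fun m _ => by ring
    rw [h1, ← Matrix.mul_assoc, hGH x hx, Matrix.one_mul]
    rfl
  have hc : ∀ i, ∀ x ∈ Ωs, CCS.Dm i G x = (Γ i x).transpose * G x + G x * Γ i x := by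
    intro i x hx
    have h1 : (Γ i x).transpose * G x = (G x * Γ i x).transpose := by
      rw [Matrix.transpose_mul, hGs x hx]
    ext j k
    rw [h1, Matrix.add_apply, Matrix.transpose_apply, hGΓ x hx, hGΓ x hx]
    change CCS.spd i (g j k) x = _
    rw [hds i x hx k j, hds j x hx i k, hds k x hx i j]
    rw [hds j x hx k i, hds k x hx j i]
    ring
  have hF : ∀ i j l k x, CCS.Fm Γ i j x l k = CCS.Riem g ginv l i j k x := by
    intro i j l k x
    simp only [CCS.Fm, CCS.Riem, Matrix.add_apply, Matrix.sub_apply, Matrix.mul_apply,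
      Finset.sum_sub_distrib]
    congr 1
    congr 1
    · exact Finset.sum_congr rfl fun m _ => mul_comm _ _
    · exact Finset.sum_congr rfl fun m _ => mul_comm _ _
  let A : Fin n → Fin n → (Fin n → ℝ) → Matrix (Fin n) (Fin n) ℝ :=
    fun i j y => CCS.Fm Γ i j y * H y
  have hA : ∀ i j, CCS.Sm Ωs (A i j) := fun i j => (CCS.Sm.Fm hΩ hΓ i j).mul hH
  have hA1 : ∀ x i j l k, A i j x l k = - A j i x l k := by
    intro x i j l k
    have : A i j x = - A j i x := by
      simp only [A]
      rw [CCS.Fm_swap Γ i j x, Matrix.neg_mul]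
    rw [this, Matrix.neg_apply]
  have hA2 : ∀ x ∈ Ωs, ∀ i j l k, A i j x l k = - A i j x k l := by
    intro x hx i j l k
    have := CCS.raised_anti hΩ hG hΓ hc hGs hGH i j hx
    exact congrFun (congrFun this k) l
  have hneg : ∀ (a : Fin n) (f : CCS.SFld n) (x : Fin n → ℝ),
      CCS.spd a (fun y => - f y) x = - CCS.spd a f x := by
    intro a f x
    simp [CCS.spd]
  let Vm : (Fin n → ℝ) → Matrix (Fin n) (Fin 1) ℝ := fun y => Matrix.of fun l _ => V l y
  have hV : CCS.Sm Ωs Vm := fun a _ => hVsm a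
  let P : Fin n → (Fin n → ℝ) → Matrix (Fin n) (Fin 1) ℝ :=
    fun j y => H y * Matrix.of fun k _ => CCS.Ric g ginv j k y
  have hP : ∀ i, ∀ x ∈ Ωs, P i x = CCS.Dm i (fun y => H y * Vm y) x + Γ i x * (H x * Vm x) := by
    intro i x hx
    have h1 : (Matrix.of fun (k : Fin n) (_ : Fin 1) => CCS.Ric g ginv i k x)
        = CCS.Dm i Vm x - (Γ i x).transpose * Vm x := by
      ext k z
      rw [Matrix.sub_apply, Matrix.mul_apply]
      exact hsoliton x hx i k
    simp only [P]
    rw [h1, CCS.Dm_mul hΩ hH hV i hx, CCS.Dm_inv hΩ hG hc hGH i hx]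
    simp only [Matrix.mul_sub, Matrix.sub_mul, Matrix.neg_mul, Matrix.mul_assoc]
    abel
  have hPA : ∀ x ∈ Ωs, ∀ j k, P j x k 0 = ∑ p, A p j x p k := by
    intro x hx j k
    simp only [P, A, Matrix.mul_apply, Matrix.of_apply, CCS.Ric, hF, Finset.mul_sum]
    rw [Finset.sum_comm]
    refine Finset.sum_congr rfl fun p _ => Finset.sum_congr rfl fun m _ => ?_
    rw [hHs x hx k m, mul_comm]
  intro x hx j
  have hdP : ∀ i j k, CCS.Dm i (P j) x k 0 = ∑ p, CCS.Dm i (A p j) x p k := by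
    intro i j k
    change CCS.spd i (fun y => P j y k 0) x = ∑ p, CCS.spd i (fun y => A p j y p k) x
    rw [CCS.spd_congr hΩ (fun y hy => hPA y hy j k) i hx]
    exact CCS.spd_sum (f := fun p y => A p j y p k) (fun p => CCS.sm_diff hΩ (hA p j p k) hx) i
  have hS : CCS.spd j (CCS.Scal g ginv) x = ∑ i, CCS.Dm j (P i) x i 0 := by
    have h1 : ∀ y ∈ Ωs, CCS.Scal g ginv y = ∑ i, P i y i 0 := by
      intro y hy
      simp only [P, Matrix.mul_apply]
      rfl
    rw [CCS.spd_congr hΩ h1 j hx]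
    refine CCS.spd_sum (f := fun i y => P i y i 0) (fun i => ?_) j
    have h2 : ContDiffOn ℝ (⊤ : ℕ∞) (fun y => P i y i 0) Ωs :=
      (ContDiffOn.sum fun p _ => hA p i p i).congr fun y hy => hPA y hy i i
    exact CCS.sm_diff hΩ h2 hx
  have hB := CCS.contract (fun a i j l k => CCS.Dm a (A i j) x l k) (fun i j l k => A i j x l k)
    (fun a l k => Γ a x l k) (hA1 x) (hA2 x hx)
    (by
      intro a i j l k
      change CCS.spd a (fun y => A i j y l k) x = - CCS.spd a (fun y => A j i y l k) x
      rw [← hneg]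
      exact CCS.spd_congr hΩ (fun y _ => hA1 y i j l k) a hx)
    (by
      intro a i j l k
      change CCS.spd a (fun y => A i j y l k) x = - CCS.spd a (fun y => A i j y k l) x
      rw [← hneg]
      exact CCS.spd_congr hΩ (fun y hy => hA2 y hy i j l k) a hx)
    (htor x hx)
    (by
      intro a i j l k
      have h1 := congrFun (congrFun (CCS.bianchi_raised hΩ hG hΓ hc hGH a i j hx) l) k
      simp only [Matrix.add_apply] at h1
      rw [Matrix.mul_apply (M := Γ a x), Matrix.mul_apply (N := (Γ a x).transpose),
        Matrix.mul_apply (M := Γ i x), Matrix.mul_apply (N := (Γ i x).transpose),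
        Matrix.mul_apply (M := Γ j x), Matrix.mul_apply (N := (Γ j x).transpose)] at h1
      exact h1) j
  have hC : ∀ i, CCS.Dm i (P j) x i 0 + ∑ m, Γ i x i m * P j x m 0
      - (CCS.Dm j (P i) x i 0 + ∑ m, Γ j x i m * P i x m 0)
      = ∑ k, CCS.Riem g ginv i i j k x * ∑ l, ginv k l x * V l x := by
    intro i
    have h1 := congrFun (congrFun (CCS.commut hΩ hΓ (hH.mul hV) hP i j hx) i) 0
    simp only [Matrix.add_apply, Matrix.sub_apply] at h1
    rw [Matrix.mul_apply (M := Γ i x), Matrix.mul_apply (M := Γ j x),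
      Matrix.mul_apply (M := CCS.Fm Γ i j x)] at h1
    rw [h1]
    refine Finset.sum_congr rfl fun k _ => ?_
    rw [hF, Matrix.mul_apply]
    rfl
  have hC2 := Finset.sum_congr (s₁ := Finset.univ) rfl fun i _ => hC i
  simp only [Finset.sum_sub_distrib, Finset.sum_add_distrib] at hC2
  rw [← hS] at hC2
  have hR : ∑ i, ∑ k, CCS.Riem g ginv i i j k x * ∑ l, ginv k l x * V l x
      = ∑ k, ∑ l, CCS.Ric g ginv j k x * ginv k l x * V l x := by
    rw [Finset.sum_comm]
    refine Finset.sum_congr rfl fun k _ => ?_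
    rw [← Finset.sum_mul, Finset.mul_sum]
    exact Finset.sum_congr rfl fun l _ => by simp only [CCS.Ric]; ring
  rw [hR] at hC2
  have hT : CCS.spd j (CCS.Scal g ginv) x = ∑ i, ∑ k, CCS.Dm j (A i k) x i k := by
    rw [hS, Finset.sum_comm]
    exact Finset.sum_congr rfl fun i _ => hdP j i i
  simp only [hdP, hPA x hx] at hC2
  rw [← hT] at hB
  linarith
end
end

section
/- Let g be a solution of the Ricci flow on Ω × [0,T), let V = (V_i(x,t)) be a smooth time-dependent 1-form satisfying at every time the gradient Ricci soliton equations ∇_i V_j = ∇_j V_i and R_{ij} = ∇_i V_j, together with ∂V_j/∂t = ΔV_j − R_{jl} g^{lm} V_m, and let U = (U_{ij}(x,t)) be a smooth time-dependent antisymmetric 2-tensor with ∇_k U_{ij} = 0 and ∂U_{ij}/∂t = ΔU_{ij} for all indices. Define the 1-form W by W_i = −U_{ij} g^{jk} V_k. Then for all 1 ≤ i,k ≤ n: (a) ∇_k W_i = −U_{ij} g^{jl} R_{kl}, and (b) ∂W_i/∂t = ΔW_i + ½ g^{pq} ∂_p R · U_{iq}, where Δ = g^{pq}∇_p∇_q is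 the rough Laplacian on tensors. -/
/- Common local-coordinate framework for the Chow–Chu space-time
   interpretation of Hamilton's Harnack inequality for the Ricci flow. -/

noncomputable section
open scoped BigOperators
open Filter

namespace CC

/-- A time-dependent scalar field on `ℝⁿ × ℝ` (space variable first, then time). -/
abbrev Fld (n : ℕ) := (Fin n → ℝ) → ℝ → ℝ

/-- A time-dependent 2-tensor field (e.g. a metric) in local coordinates. -/
abbrev Met (n : ℕ) := Fin n → Fin n → Fld n

variable {n : ℕ}

/-- Spatial partial derivative `∂ᵢ` of a time-dependent scalar field. -/
def spd (i : Fin n) (u : Fld n) : Fld n :=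
  fun x t => fderiv ℝ (fun y => u y t) x (Pi.single i 1)

/-- Time partial derivative `∂/∂t` of a time-dependent scalar field. -/
def tpd (u : Fld n) : Fld n :=
  fun x t => deriv (fun s => u x s) t

/-- Christoffel symbols `Γ^k_{ij} = ½ g^{kl}(∂ᵢ g_{jl} + ∂ⱼ g_{il} − ∂ₗ g_{ij})`. -/
def Gamma (g ginv : Met n) (k i j : Fin n) : Fld n :=
  fun x t => (1/2) * ∑ l, ginv k l x t *
    (spd i (g j l) x t + spd j (g i l) x t - spd l (g i j) x t)

/-- Riemann curvature `R^l_{ijk} = ∂ᵢΓ^l_{jk} − ∂ⱼΓ^l_{ik} + Γ^m_{jk}Γ^l_{im} − Γ^m_{ik}Γ^l_{jm}`. -/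
def Riem (g ginv : Met n) (l i j k : Fin n) : Fld n :=
  fun x t => spd i (Gamma g ginv l j k) x t - spd j (Gamma g ginv l i k) x t
    + ∑ m, (Gamma g ginv m j k x t * Gamma g ginv l i m x t
          - Gamma g ginv m i k x t * Gamma g ginv l j m x t)

/-- Ricci curvature `R_{jk} = R^p_{pjk}`. -/
def Ric (g ginv : Met n) (j k : Fin n) : Fld n :=
  fun x t => ∑ p, Riem g ginv p p j k x t

/-- Scalar curvature `R = g^{jk} R_{jk}`. -/
def Scal (g ginv : Met n) : Fld n :=
  fun x t => ∑ j, ∑ k, ginv j k x t * Ric g ginv j k x t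

/-- Ricci curvature with raised index, `R^k_i = g^{km} R_{im}`. -/
def RicUp (g ginv : Met n) (k i : Fin n) : Fld n :=
  fun x t => ∑ m, ginv k m x t * Ric g ginv i m x t

/-- Fully lowered Riemann tensor `R_{ijkl} = g_{lm} R^m_{ijk}`. -/
def RiemLow (g ginv : Met n) (i j k l : Fin n) : Fld n :=
  fun x t => ∑ m, g l m x t * Riem g ginv m i j k x t

/-- Covariant derivative of a 1-form: `∇ᵢω_j = ∂ᵢω_j − Γ^p_{ij} ω_p`. -/
def cd1 (g ginv : Met n) (i : Fin n) (ω : Fin n → Fld n) (j : Fin n) : Fld n :=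
  fun x t => spd i (ω j) x t - ∑ p, Gamma g ginv p i j x t * ω p x t

/-- Covariant derivative of a (0,2)-tensor. -/
def cd2 (g ginv : Met n) (i : Fin n) (A : Fin n → Fin n → Fld n) (j k : Fin n) : Fld n :=
  fun x t => spd i (A j k) x t - ∑ p, Gamma g ginv p i j x t * A p k x t
    - ∑ p, Gamma g ginv p i k x t * A j p x t

/-- Covariant derivative of a (1,1)-tensor `T^l_j`:
`∇_a T^l_j = ∂_a T^l_j + Γ^l_{ap} T^p_j − Γ^p_{aj} T^l_p`. -/
def cd11 (g ginv : Met n) (a : Fin n) (T : Fin n → Fin n → Fld n) (l j : Fin n) : Fld n :=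
  fun x t => spd a (T l j) x t + ∑ p, Gamma g ginv l a p x t * T p j x t
    - ∑ p, Gamma g ginv p a j x t * T l p x t

/-- Covariant derivative of a vector field: `∇ᵢV^l = ∂ᵢV^l + Γ^l_{ip} V^p`. -/
def cdVec (g ginv : Met n) (i : Fin n) (V : Fin n → Fld n) (l : Fin n) : Fld n :=
  fun x t => spd i (V l) x t + ∑ p, Gamma g ginv l i p x t * V p x t

/-- Hessian of a scalar: `∇ᵢ∇ⱼu = ∂ᵢ∂ⱼu − Γ^p_{ij}∂_p u`. -/
def hess (g ginv : Met n) (u : Fld n) (i j : Fin n) : Fld n :=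
  fun x t => spd i (spd j u) x t - ∑ p, Gamma g ginv p i j x t * spd p u x t

/-- Gradient (raised differential) of the scalar curvature: `∇^l R = g^{lm}∂_m R`. -/
def gradScal (g ginv : Met n) (l : Fin n) : Fld n :=
  fun x t => ∑ m, ginv l m x t * spd m (Scal g ginv) x t

/-- Rough Laplacian `Δ = g^{pq}∇_p∇_q` on 1-forms. -/
def lap1 (g ginv : Met n) (V : Fin n → Fld n) (j : Fin n) : Fld n :=
  fun x t => ∑ p, ∑ q, ginv p q x t *
    (spd p (cd1 g ginv q V j) x t
     - ∑ m, Gamma g ginv m p q x t * cd1 g ginv m V j x t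
     - ∑ m, Gamma g ginv m p j x t * cd1 g ginv q V m x t)

/-- Rough Laplacian `Δ = g^{pq}∇_p∇_q` on (0,2)-tensors. -/
def lap02 (g ginv : Met n) (A : Fin n → Fin n → Fld n) (i j : Fin n) : Fld n :=
  fun x t => ∑ p, ∑ q, ginv p q x t *
    (spd p (cd2 g ginv q A i j) x t
     - ∑ m, Gamma g ginv m p q x t * cd2 g ginv m A i j x t
     - ∑ m, Gamma g ginv m p i x t * cd2 g ginv q A m j x t
     - ∑ m, Gamma g ginv m p j x t * cd2 g ginv q A i m x t)

/-- Rough Laplacian `Δ = g^{pq}∇_p∇_q` on (1,1)-tensors. -/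
def lap11 (g ginv : Met n) (T : Fin n → Fin n → Fld n) (l i : Fin n) : Fld n :=
  fun x t => ∑ p, ∑ q, ginv p q x t *
    (spd p (cd11 g ginv q T l i) x t
     + ∑ m, Gamma g ginv l p m x t * cd11 g ginv q T m i x t
     - ∑ m, Gamma g ginv m p q x t * cd11 g ginv m T l i x t
     - ∑ m, Gamma g ginv m p i x t * cd11 g ginv q T l m x t)

/-- Laplacian of the scalar curvature `ΔR = g^{ij}(∂ᵢ∂ⱼR − Γ^p_{ij}∂_pR)`. -/
def lapScal (g ginv : Met n) : Fld n :=
  fun x t => ∑ i, ∑ j, ginv i j x t * hess g ginv (Scal g ginv) i j x t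

/-- Squared norm of the Ricci tensor `|Ric|² = g^{ik}g^{jl}R_{ij}R_{kl}`. -/
def normRicSq (g ginv : Met n) : Fld n :=
  fun x t => ∑ i, ∑ j, ∑ k, ∑ l,
    ginv i k x t * ginv j l x t * Ric g ginv i j x t * Ric g ginv k l x t

/-- Hamilton's tensor `P_{ijk} = ∇ᵢR_{jk} − ∇ⱼR_{ik}`. -/
def Pt (g ginv : Met n) (i j k : Fin n) : Fld n :=
  fun x t => cd2 g ginv i (Ric g ginv) j k x t - cd2 g ginv j (Ric g ginv) i k x t

/-- Hamilton's tensor `M_{ij} = ΔR_{ij} − ½∇ᵢ∇ⱼR + 2R_{kijl}R_{kl} − R_{ik}R_{kj}`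
(repeated lower indices contracted with `g^{··}`). -/
def Mt (g ginv : Met n) (i j : Fin n) : Fld n :=
  fun x t => lap02 g ginv (Ric g ginv) i j x t
    - (1/2) * hess g ginv (Scal g ginv) i j x t
    + 2 * ∑ k, ∑ l, ∑ a, ∑ b, ginv k a x t * ginv l b x t *
        RiemLow g ginv k i j l x t * Ric g ginv a b x t
    - ∑ k, ∑ a, ginv k a x t * Ric g ginv i k x t * Ric g ginv a j x t

/-- Hamilton's Harnack quadratic
`Z(U,W) = M_{ij}W_iW_j − 2P_{ijk}U_{ij}W_k + R_{ijkl}U_{ij}U_{lk}`,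
repeated lower indices being contracted with `g^{··}`. -/
def Zharnack (g ginv : Met n) (U : Fin n → Fin n → ℝ) (W : Fin n → ℝ) : Fld n :=
  fun x t =>
    (∑ i, ∑ j, ∑ p, ∑ q, ginv i p x t * ginv j q x t * Mt g ginv i j x t * W p * W q)
    - 2 * (∑ i, ∑ j, ∑ k, ∑ p, ∑ q, ∑ r,
        ginv i p x t * ginv j q x t * ginv k r x t * Pt g ginv i j k x t * U p q * W r)
    + (∑ i, ∑ j, ∑ k, ∑ l, ∑ p, ∑ q, ∑ r, ∑ s,
        ginv i p x t * ginv j q x t * ginv k r x t * ginv l s x t *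
          RiemLow g ginv i j k l x t * U p q * U s r)

/-- `g` (with pointwise inverse `ginv`) is a smooth solution of the Ricci flow
`∂g_{ij}/∂t = −2R_{ij}` on `Ω × [0,T)`. -/
def RicciFlow (Ωs : Set (Fin n → ℝ)) (T : ℝ) (g ginv : Met n) : Prop :=
  IsOpen Ωs ∧ IsConnected Ωs ∧ 0 < T ∧
  (∀ i j, ContDiffOn ℝ (⊤ : ℕ∞) (fun p : (Fin n → ℝ) × ℝ => g i j p.1 p.2)
      (Ωs ×ˢ Set.Ico 0 T)) ∧
  (∀ x ∈ Ωs, ∀ t ∈ Set.Ico (0:ℝ) T,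
    (∀ i j, g i j x t = g j i x t) ∧
    (∀ v : Fin n → ℝ, v ≠ 0 → 0 < ∑ i, ∑ j, g i j x t * v i * v j) ∧
    (∀ i j, ∑ k, g i k x t * ginv k j x t = (if i = j then (1:ℝ) else 0)) ∧
    (∀ i j, tpd (g i j) x t = -2 * Ric g ginv i j x t))

/-! ### Space-time objects -/

/-- A space-time connection on `M̃ = Ω × [0,T)`: the index `0` is time,
the index `i.succ` is the spatial direction `i`. -/
abbrev Con (n : ℕ) := Fin (n+1) → Fin (n+1) → Fin (n+1) → Fld n

/-- Space-time partial derivative: `∂₀ = ∂/∂t` and `∂_{i.succ} = ∂ᵢ`. -/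
def spdT (i : Fin (n+1)) (u : Fld n) : Fld n :=
  Fin.cases (tpd u) (fun j => spd j u) i

/-- Curvature of a space-time connection:
`R̃^l_{ijk} = ∂ᵢΓ̃^l_{jk} − ∂ⱼΓ̃^l_{ik} + Σ_m (Γ̃^m_{jk}Γ̃^l_{im} − Γ̃^m_{ik}Γ̃^l_{jm})`. -/
def RiemT (Γ : Con n) (l i j k : Fin (n+1)) : Fld n :=
  fun x t => spdT i (Γ l j k) x t - spdT j (Γ l i k) x t
    + ∑ m : Fin (n+1), (Γ m j k x t * Γ l i m x t - Γ m i k x t * Γ l j m x t)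

/-- Ricci tensor of a space-time connection: `R̃_{jk} = Σ_p R̃^p_{pjk}`. -/
def RicT (Γ : Con n) (j k : Fin (n+1)) : Fld n :=
  fun x t => ∑ p : Fin (n+1), RiemT Γ p p j k x t

/-- Space-time covariant derivative of a (0,2)-tensor with respect to a connection. -/
def cdT2 (Γ : Con n) (a : Fin (n+1)) (A : Fin (n+1) → Fin (n+1) → Fld n)
    (b c : Fin (n+1)) : Fld n :=
  fun x t => spdT a (A b c) x t - ∑ p : Fin (n+1), Γ p a b x t * A p c x t
    - ∑ p : Fin (n+1), Γ p a c x t * A b p x t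

/-- Space-time covariant derivative of a (1,1)-tensor with respect to a connection. -/
def cdT11 (Γ : Con n) (a : Fin (n+1)) (T : Fin (n+1) → Fin (n+1) → Fld n)
    (l j : Fin (n+1)) : Fld n :=
  fun x t => spdT a (T l j) x t + ∑ p : Fin (n+1), Γ l a p x t * T p j x t
    - ∑ p : Fin (n+1), Γ p a j x t * T l p x t

/-- Time shift of a field by `τ`. -/
def shift (τ : ℝ) (u : Fld n) : Fld n := fun x t => u x (t + τ)

/-- The degenerate inverse metric on space-time (no time shift):
`g̃^{ij} = g^{ij}` for spatial `i,j` and `g̃^{ij} = 0` if `i = 0` or `j = 0`. -/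
def gdegM (ginv : Met n) (i j : Fin (n+1)) : Fld n :=
  Fin.cases (fun _ _ => (0:ℝ))
    (fun i' => Fin.cases (fun _ _ => (0:ℝ)) (fun j' => ginv i' j') j) i

/-- The degenerate inverse metric `g̃_τ` on `M̃_τ`, shifted in time by `τ`. -/
def gdeg (ginv : Met n) (τ : ℝ) (i j : Fin (n+1)) : Fld n :=
  shift τ (gdegM ginv i j)

/-- The Chow–Chu connection `Γ̃_τ` on space-time, defined by (A1)–(A4)
(with time shift `τ`). -/
def GammaA (g ginv : Met n) (τ : ℝ) : Con n :=
  fun k i j =>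
    Fin.cases (fun _ _ => (0:ℝ))
      (fun k' =>
        Fin.cases
          (Fin.cases
            (shift τ (fun x t => -(1/2) * ∑ m, ginv k' m x t * spd m (Scal g ginv) x t))
            (fun j' => shift τ (fun x t => -(RicUp g ginv k' j' x t))) j)
          (fun i' =>
            Fin.cases (shift τ (fun x t => -(RicUp g ginv k' i' x t)))
              (fun j' => shift τ (Gamma g ginv k' i' j')) j) i) k

/-! ### The modified flow -/

/-- `∇ᵢ∇^k f = g^{km} ∇ᵢ∇ₘ f`. -/
def hessUp (g ginv : Met n) (f : Fld n) (i k : Fin n) : Fld n :=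
  fun x t => ∑ m, ginv k m x t * hess g ginv f i m x t

/-- `∇^p f = g^{pq} ∂_q f`. -/
def gradf (ginv : Met n) (f : Fld n) (p : Fin n) : Fld n :=
  fun x t => ∑ q, ginv p q x t * spd q f x t

/-- The potential `−½R + ∂f/∂t − ½|∇f|²`. -/
def Fpot (g ginv : Met n) (f : Fld n) : Fld n :=
  fun x t => -(1/2) * Scal g ginv x t + tpd f x t
    - (1/2) * ∑ p, ∑ q, ginv p q x t * spd p f x t * spd q f x t

/-- The space-time connection `Γ̃` of the modified flow, defined by (D1)–(D4). -/
def GammaD (g ginv : Met n) (f : Fld n) : Con n :=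
  fun k i j =>
    Fin.cases (fun _ _ => (0:ℝ))
      (fun k' =>
        Fin.cases
          (Fin.cases
            (fun x t => ∑ l, ginv k' l x t * spd l (Fpot g ginv f) x t)
            (fun j' => fun x t => -(RicUp g ginv k' j' x t) + hessUp g ginv f j' k' x t) j)
          (fun i' =>
            Fin.cases
              (fun x t => -(RicUp g ginv k' i' x t) + hessUp g ginv f i' k' x t)
              (fun j' => Gamma g ginv k' i' j') j) i) k

/-- Space-time Hessian `∇̃_a∇̃_b f = ∂_a∂_b f − Σ_p Γ̃^p_{ab} ∂_p f` (with `∂₀ = ∂/∂t`). -/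
def hessT (Γ : Con n) (f : Fld n) (a b : Fin (n+1)) : Fld n :=
  fun x t => spdT a (spdT b f) x t - ∑ p : Fin (n+1), Γ p a b x t * spdT p f x t

/-- Space-time Ricci tensor with first index raised by the degenerate metric:
`R̃^k_i = Σ_{p=1}^n g^{kp} R̃_{pi}` for spatial `k`, and `R̃^0_i = 0`. -/
def ricTup (ginv : Met n) (Γ : Con n) (k i : Fin (n+1)) : Fld n :=
  Fin.cases (fun _ _ => (0:ℝ))
    (fun k' => fun x t => ∑ p, ginv k' p x t * RicT Γ p.succ i x t) k

/-- `g` is a smooth solution of the modified Ricci flow with potential `f`: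
`∂g_{ij}/∂t = −2R_{ij} + 2∇ᵢ∇ⱼf` on `Ω × [0,T)`. -/
def ModifiedRicciFlow (Ωs : Set (Fin n → ℝ)) (T : ℝ) (g ginv : Met n) (f : Fld n) : Prop :=
  IsOpen Ωs ∧ IsConnected Ωs ∧ 0 < T ∧
  (∀ i j, ContDiffOn ℝ (⊤ : ℕ∞) (fun p : (Fin n → ℝ) × ℝ => g i j p.1 p.2)
      (Ωs ×ˢ Set.Ico 0 T)) ∧
  ContDiffOn ℝ (⊤ : ℕ∞) (fun p : (Fin n → ℝ) × ℝ => f p.1 p.2) (Ωs ×ˢ Set.Ico 0 T) ∧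
  (∀ x ∈ Ωs, ∀ t ∈ Set.Ico (0:ℝ) T,
    (∀ i j, g i j x t = g j i x t) ∧
    (∀ v : Fin n → ℝ, v ≠ 0 → 0 < ∑ i, ∑ j, g i j x t * v i * v j) ∧
    (∀ i j, ∑ k, g i k x t * ginv k j x t = (if i = j then (1:ℝ) else 0)) ∧
    (∀ i j, tpd (g i j) x t = -2 * Ric g ginv i j x t + 2 * hess g ginv f i j x t))

/-! ### The approximating metrics `g̃_{ε,δ}` -/

/-- The space-time metric `g̃_{ε,δ}`: spatial part `g`, `g̃_{00} = R + ε/(2(t+δ))`,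
mixed components zero. -/
def gE (g ginv : Met n) (ε δ : ℝ) (i j : Fin (n+1)) : Fld n :=
  Fin.cases
    (Fin.cases (fun x t => Scal g ginv x t + ε / (2 * (t + δ)))
      (fun _ => fun _ _ => (0:ℝ)) j)
    (fun i' => Fin.cases (fun _ _ => (0:ℝ)) (fun j' => g i' j') j) i

/-- The (block-diagonal) inverse of `g̃_{ε,δ}`. -/
def gEinv (g ginv : Met n) (ε δ : ℝ) (i j : Fin (n+1)) : Fld n :=
  Fin.cases
    (Fin.cases (fun x t => (Scal g ginv x t + ε / (2 * (t + δ)))⁻¹)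
      (fun _ => fun _ _ => (0:ℝ)) j)
    (fun i' => Fin.cases (fun _ _ => (0:ℝ)) (fun j' => ginv i' j') j) i

/-- The Levi-Civita Christoffel symbols of `g̃_{ε,δ}`:
`Γ̃^k_{ij} = ½ g̃^{kl}(∂ᵢg̃_{jl} + ∂ⱼg̃_{il} − ∂ₗg̃_{ij})`, indices in `0,…,n`. -/
def GammaE (g ginv : Met n) (ε δ : ℝ) : Con n :=
  fun k i j => fun x t => (1/2) * ∑ l : Fin (n+1), gEinv g ginv ε δ k l x t *
    (spdT i (gE g ginv ε δ j l) x t + spdT j (gE g ginv ε δ i l) x t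
      - spdT l (gE g ginv ε δ i j) x t)

end CC

namespace CCaux
open Matrix
variable {n : ℕ}

/-- partial derivative in direction i -/
def D (i : Fin n) (f : (Fin n → ℝ) → ℝ) (x : Fin n → ℝ) : ℝ := fderiv ℝ f x (Pi.single i 1)

/-- entrywise partial derivative of a matrix-valued function -/
def DM (i : Fin n) (M : (Fin n → ℝ) → Matrix (Fin n) (Fin n) ℝ) (x : Fin n → ℝ) :
    Matrix (Fin n) (Fin n) ℝ := fun a b => D i (fun y => M y a b) x

def Sm (Ω : Set (Fin n → ℝ)) (f : (Fin n → ℝ) → ℝ) : Prop := ContDiffOn ℝ (⊤ : ℕ∞) f Ω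

def MS (Ω : Set (Fin n → ℝ)) (M : (Fin n → ℝ) → Matrix (Fin n) (Fin n) ℝ) : Prop :=
  ∀ a b, Sm Ω (fun y => M y a b)

variable {Ω : Set (Fin n → ℝ)}

theorem Sm.diff {f : (Fin n → ℝ) → ℝ} (hΩ : IsOpen Ω) (h : Sm Ω f) {x} (hx : x ∈ Ω) :
    DifferentiableAt ℝ f x :=
  (h.contDiffAt (hΩ.mem_nhds hx)).differentiableAt (by simp)

theorem Sm.D {f : (Fin n → ℝ) → ℝ} (hΩ : IsOpen Ω) (h : Sm Ω f) (i : Fin n) :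
    Sm Ω (D i f) := by
  have : ContDiffOn ℝ (⊤ : ℕ∞) (fderiv ℝ f) Ω := h.fderiv_of_isOpen hΩ (by simp)
  exact this.clm_apply contDiffOn_const

theorem D_congr {f f' : (Fin n → ℝ) → ℝ} (hΩ : IsOpen Ω) (h : ∀ y ∈ Ω, f y = f' y) (i : Fin n)
    {x} (hx : x ∈ Ω) : D i f x = D i f' x := by
  unfold D
  rw [Filter.EventuallyEq.fderiv_eq]
  exact Filter.eventually_of_mem (hΩ.mem_nhds hx) h

theorem Sm.congr' {f f' : (Fin n → ℝ) → ℝ} (h : Sm Ω f) (he : ∀ y ∈ Ω, f' y = f y) : Sm Ω f' :=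
  ContDiffOn.congr h he

theorem D_add {f f' : (Fin n → ℝ) → ℝ} {x} (i : Fin n) (h : DifferentiableAt ℝ f x)
    (h' : DifferentiableAt ℝ f' x) : D i (fun y => f y + f' y) x = D i f x + D i f' x := by
  unfold D; rw [fderiv_fun_add h h']; rfl

theorem D_sub {f f' : (Fin n → ℝ) → ℝ} {x} (i : Fin n) (h : DifferentiableAt ℝ f x)
    (h' : DifferentiableAt ℝ f' x) : D i (fun y => f y - f' y) x = D i f x - D i f' x := by
  unfold D; rw [fderiv_fun_sub h h']; rfl

theorem D_neg {f : (Fin n → ℝ) → ℝ} {x} (i : Fin n) :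
    D i (fun y => - f y) x = - D i f x := by
  unfold D; rw [fderiv_fun_neg]; rfl

theorem D_mul {f f' : (Fin n → ℝ) → ℝ} {x} (i : Fin n) (h : DifferentiableAt ℝ f x)
    (h' : DifferentiableAt ℝ f' x) : D i (fun y => f y * f' y) x = D i f x * f' x + f x * D i f' x := by
  unfold D; rw [fderiv_fun_mul h h']; simp; ring

theorem D_sum {ι : Type} (s : Finset ι) {f : ι → (Fin n → ℝ) → ℝ} {x} (i : Fin n)
    (h : ∀ k ∈ s, DifferentiableAt ℝ (f k) x) :
    D i (fun y => ∑ k ∈ s, f k y) x = ∑ k ∈ s, D i (f k) x := by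
  unfold D; rw [fderiv_fun_sum h]; simp

theorem D_const {x : Fin n → ℝ} (i : Fin n) (c : ℝ) : D i (fun _ => c) x = 0 := by
  unfold D; simp

theorem D_comm {f : (Fin n → ℝ) → ℝ} (hΩ : IsOpen Ω) (h : Sm Ω f) (i j : Fin n) {x} (hx : x ∈ Ω) :
    D i (D j f) x = D j (D i f) x := by
  have hc : ContDiffAt ℝ (⊤ : ℕ∞) f x := h.contDiffAt (hΩ.mem_nhds hx)
  have hs : IsSymmSndFDerivAt ℝ f x := hc.isSymmSndFDerivAt (by
    simp only [minSmoothness_of_isRCLikeNormedField]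
    exact WithTop.coe_le_coe.mpr (show (2 : ℕ∞) ≤ ⊤ from le_top))
  have h1 : ContDiffOn ℝ (⊤ : ℕ∞) (fderiv ℝ f) Ω := h.fderiv_of_isOpen hΩ (by simp)
  have hd : DifferentiableAt ℝ (fderiv ℝ f) x :=
    (h1.contDiffAt (hΩ.mem_nhds hx)).differentiableAt (by simp)
  have key : ∀ a b : Fin n, D a (D b f) x = fderiv ℝ (fderiv ℝ f) x (Pi.single a 1) (Pi.single b 1) := by
    intro a b
    have : D b f = fun y => fderiv ℝ f y (Pi.single b 1) := rfl
    rw [this]; unfold D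
    rw [fderiv_clm_apply hd (by fun_prop)]
    simp
  rw [key, key]; exact hs _ _

/-! matrix level -/
variable {M N : (Fin n → ℝ) → Matrix (Fin n) (Fin n) ℝ}

theorem Sm.add {f f' : (Fin n → ℝ) → ℝ} (h : Sm Ω f) (h' : Sm Ω f') : Sm Ω (fun y => f y + f' y) :=
  ContDiffOn.add h h'
theorem Sm.sub {f f' : (Fin n → ℝ) → ℝ} (h : Sm Ω f) (h' : Sm Ω f') : Sm Ω (fun y => f y - f' y) :=
  ContDiffOn.sub h h'
theorem Sm.mul {f f' : (Fin n → ℝ) → ℝ} (h : Sm Ω f) (h' : Sm Ω f') : Sm Ω (fun y => f y * f' y) :=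
  ContDiffOn.mul h h'
theorem Sm.neg {f : (Fin n → ℝ) → ℝ} (h : Sm Ω f) : Sm Ω (fun y => - f y) :=
  ContDiffOn.neg h
theorem Sm.const (c : ℝ) : Sm Ω (fun _ => c) := contDiffOn_const
theorem Sm.sum {ι : Type} (s : Finset ι) {f : ι → (Fin n → ℝ) → ℝ} (h : ∀ k ∈ s, Sm Ω (f k)) :
    Sm Ω (fun y => ∑ k ∈ s, f k y) := ContDiffOn.sum h

theorem MS.add (h : MS Ω M) (h' : MS Ω N) : MS Ω (fun y => M y + N y) :=
  fun a b => (h a b).add (h' a b)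
theorem MS.sub (h : MS Ω M) (h' : MS Ω N) : MS Ω (fun y => M y - N y) :=
  fun a b => (h a b).sub (h' a b)
theorem MS.neg (h : MS Ω M) : MS Ω (fun y => - M y) := fun a b => (h a b).neg
theorem MS.tr (h : MS Ω M) : MS Ω (fun y => (M y)ᵀ) := fun a b => h b a
theorem MS.mul (h : MS Ω M) (h' : MS Ω N) : MS Ω (fun y => M y * N y) := by
  intro a b
  simp only [Matrix.mul_apply]
  exact Sm.sum _ fun k _ => (h a k).mul (h' k b)
theorem MS.DM (hΩ : IsOpen Ω) (h : MS Ω M) (i : Fin n) : MS Ω (DM i M) :=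
  fun a b => (h a b).D hΩ i

theorem DM_add (hΩ : IsOpen Ω) (h : MS Ω M) (h' : MS Ω N) (i : Fin n) {x} (hx : x ∈ Ω) :
    DM i (fun y => M y + N y) x = DM i M x + DM i N x := by
  ext a b; exact D_add i ((h a b).diff hΩ hx) ((h' a b).diff hΩ hx)
theorem DM_sub (hΩ : IsOpen Ω) (h : MS Ω M) (h' : MS Ω N) (i : Fin n) {x} (hx : x ∈ Ω) :
    DM i (fun y => M y - N y) x = DM i M x - DM i N x := by
  ext a b; exact D_sub i ((h a b).diff hΩ hx) ((h' a b).diff hΩ hx)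
theorem DM_neg (i : Fin n) {x} : DM i (fun y => - M y) x = - DM i M x := by
  ext a b; exact D_neg i
theorem DM_tr (i : Fin n) {x} : DM i (fun y => (M y)ᵀ) x = (DM i M x)ᵀ := rfl
theorem DM_mul (hΩ : IsOpen Ω) (h : MS Ω M) (h' : MS Ω N) (i : Fin n) {x} (hx : x ∈ Ω) :
    DM i (fun y => M y * N y) x = DM i M x * N x + M x * DM i N x := by
  ext a b
  simp only [DM, Matrix.mul_apply, Matrix.add_apply]
  rw [D_sum]
  · rw [← Finset.sum_add_distrib]
    exact Finset.sum_congr rfl fun k _ => D_mul i ((h a k).diff hΩ hx) ((h' k b).diff hΩ hx)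
  · exact fun k _ => ((h a k).diff hΩ hx).mul ((h' k b).diff hΩ hx)
theorem DM_congr (hΩ : IsOpen Ω) (h : ∀ y ∈ Ω, M y = N y) (i : Fin n) {x} (hx : x ∈ Ω) :
    DM i M x = DM i N x := by
  ext a b; exact D_congr hΩ (fun y hy => by rw [h y hy]) i hx
theorem DM_comm (hΩ : IsOpen Ω) (h : MS Ω M) (i j : Fin n) {x} (hx : x ∈ Ω) :
    DM i (DM j M) x = DM j (DM i M) x := by
  ext a b; exact D_comm hΩ (h a b) i j hx

/-- curvature matrices of a connection -/
def Cv (A : Fin n → (Fin n → ℝ) → Matrix (Fin n) (Fin n) ℝ) (i j : Fin n) (y : Fin n → ℝ) :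
    Matrix (Fin n) (Fin n) ℝ := DM i (A j) y - DM j (A i) y + (A i y * A j y - A j y * A i y)

section conn
variable {A : Fin n → (Fin n → ℝ) → Matrix (Fin n) (Fin n) ℝ}
  {H : (Fin n → ℝ) → Matrix (Fin n) (Fin n) ℝ}

theorem Cv_smooth (hΩ : IsOpen Ω) (hA : ∀ i, MS Ω (A i)) (i j : Fin n) : MS Ω (Cv A i j) :=
  (((hA j).DM hΩ i).sub ((hA i).DM hΩ j)).add (((hA i).mul (hA j)).sub ((hA j).mul (hA i)))

theorem Cv_anti (i j : Fin n) (y) : Cv A j i y = - Cv A i j y := by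
  unfold Cv; noncomm_ring

theorem DCv (hΩ : IsOpen Ω) (hA : ∀ i, MS Ω (A i)) (a i j : Fin n) {x} (hx : x ∈ Ω) :
    DM a (Cv A i j) x = DM a (DM i (A j)) x - DM a (DM j (A i)) x
      + ((DM a (A i) x * A j x + A i x * DM a (A j) x)
        - (DM a (A j) x * A i x + A j x * DM a (A i) x)) := by
  unfold Cv
  rw [DM_add hΩ (((hA j).DM hΩ i).sub ((hA i).DM hΩ j))
    (((hA i).mul (hA j)).sub ((hA j).mul (hA i))) a hx,
    DM_sub hΩ ((hA j).DM hΩ i) ((hA i).DM hΩ j) a hx,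
    DM_sub hΩ ((hA i).mul (hA j)) ((hA j).mul (hA i)) a hx,
    DM_mul hΩ (hA i) (hA j) a hx, DM_mul hΩ (hA j) (hA i) a hx]

/-- gauge covariant derivative of curvature -/
def Ec (A : Fin n → (Fin n → ℝ) → Matrix (Fin n) (Fin n) ℝ) (a i j : Fin n) (x : Fin n → ℝ) :
    Matrix (Fin n) (Fin n) ℝ :=
  DM a (Cv A i j) x + (A a x * Cv A i j x - Cv A i j x * A a x)

theorem bianchi (hΩ : IsOpen Ω) (hA : ∀ i, MS Ω (A i)) (a i j : Fin n) {x} (hx : x ∈ Ω) :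
    Ec A a i j x + Ec A i j a x + Ec A j a i x = 0 := by
  unfold Ec
  rw [DCv hΩ hA a i j hx, DCv hΩ hA i j a hx, DCv hΩ hA j a i hx,
    DM_comm hΩ (hA j) a i hx, DM_comm hΩ (hA i) j a hx, DM_comm hΩ (hA a) i j hx]
  unfold Cv
  noncomm_ring

theorem curv_skew (hΩ : IsOpen Ω) (hA : ∀ i, MS Ω (A i)) (hH : MS Ω H)
    (hDH : ∀ i, ∀ y ∈ Ω, DM i H y = - (A i y * H y) - H y * (A i y)ᵀ)
    (i j : Fin n) {x} (hx : x ∈ Ω) : Cv A i j x * H x + H x * (Cv A i j x)ᵀ = 0 := by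
  have key : ∀ i j : Fin n, DM i (DM j H) x =
      -(DM i (A j) x * H x + A j x * (- (A i x * H x) - H x * (A i x)ᵀ))
      - ((- (A i x * H x) - H x * (A i x)ᵀ) * (A j x)ᵀ + H x * (DM i (A j) x)ᵀ) := by
    intro i j
    rw [DM_congr hΩ (hDH j) i hx, DM_sub hΩ ((hA j).mul hH).neg (hH.mul (hA j).tr) i hx,
      DM_neg, DM_mul hΩ (hA j) hH i hx, DM_mul hΩ hH (hA j).tr i hx, DM_tr, hDH i x hx]
  have h := DM_comm hΩ hH i j hx
  rw [key, key] at h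
  have h2 := sub_eq_zero.mpr h
  rw [← neg_eq_zero, ← h2]
  unfold Cv
  simp only [Matrix.transpose_add, Matrix.transpose_sub, Matrix.transpose_mul]
  noncomm_ring

theorem Ec_skew (hΩ : IsOpen Ω) (hA : ∀ i, MS Ω (A i)) (hH : MS Ω H)
    (hDH : ∀ i, ∀ y ∈ Ω, DM i H y = - (A i y * H y) - H y * (A i y)ᵀ)
    (a i j : Fin n) {x} (hx : x ∈ Ω) : Ec A a i j x * H x + H x * (Ec A a i j x)ᵀ = 0 := by
  have hF := Cv_smooth hΩ hA i j
  have h0 : DM a (fun y => Cv A i j y * H y + H y * (Cv A i j y)ᵀ) x = 0 := by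
    rw [DM_congr hΩ (N := fun _ => 0) (fun y hy => curv_skew hΩ hA hH hDH i j hy) a hx]
    ext b c; exact D_const a 0
  rw [DM_add hΩ (hF.mul hH) (hH.mul hF.tr) a hx, DM_mul hΩ hF hH a hx, DM_mul hΩ hH hF.tr a hx,
    DM_tr, hDH a x hx] at h0
  have hs := curv_skew hΩ hA hH hDH i j hx
  have h3 : Cv A i j x * H x = - (H x * (Cv A i j x)ᵀ) := eq_neg_of_add_eq_zero_left hs
  unfold Ec
  simp only [Matrix.transpose_add, Matrix.transpose_sub, Matrix.transpose_mul]
  set F := Cv A i j x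
  set P := DM a (Cv A i j) x
  have : (P + (A a x * F - F * A a x)) * H x + H x * (Pᵀ + (Fᵀ * (A a x)ᵀ - (A a x)ᵀ * Fᵀ))
    = (P * H x + F * (-(A a x * H x) - H x * (A a x)ᵀ) +
      ((-(A a x * H x) - H x * (A a x)ᵀ) * Fᵀ + H x * Pᵀ)) + A a x * (F * H x + H x * Fᵀ)
        + (F * H x + H x * Fᵀ) * (A a x)ᵀ := by noncomm_ring
  rw [this, h0, hs]; simp

/-- full covariant derivative of the curvature -/
def nR (A : Fin n → (Fin n → ℝ) → Matrix (Fin n) (Fin n) ℝ) (a i j : Fin n) (x : Fin n → ℝ) :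
    Matrix (Fin n) (Fin n) ℝ :=
  Ec A a i j x - ∑ m, A a x m i • Cv A m j x - ∑ m, A a x m j • Cv A i m x

theorem nR_skew (hΩ : IsOpen Ω) (hA : ∀ i, MS Ω (A i)) (hH : MS Ω H)
    (hDH : ∀ i, ∀ y ∈ Ω, DM i H y = - (A i y * H y) - H y * (A i y)ᵀ)
    (a i j : Fin n) {x} (hx : x ∈ Ω) : nR A a i j x * H x + H x * (nR A a i j x)ᵀ = 0 := by
  have e1 := Ec_skew hΩ hA hH hDH a i j hx
  have e2 : ∀ i j, H x * (Cv A i j x)ᵀ = - (Cv A i j x * H x) := fun i j =>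
    eq_neg_of_add_eq_zero_right (curv_skew hΩ hA hH hDH i j hx)
  unfold nR
  simp only [Matrix.transpose_sub, Matrix.transpose_sum, Matrix.transpose_smul, Matrix.sub_mul,
    Matrix.mul_sub, Matrix.sum_mul, Matrix.mul_sum, Matrix.smul_mul, Matrix.mul_smul, e2,
    eq_neg_of_add_eq_zero_right e1, smul_neg, Finset.sum_neg_distrib]
  abel

theorem nR_bianchi (hΩ : IsOpen Ω) (hA : ∀ i, MS Ω (A i))
    {x} (hx : x ∈ Ω) (hsym : ∀ i k l, A i x l k = A k x l i) (a i j : Fin n) :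
    nR A a i j x + nR A i j a x + nR A j a i x = 0 := by
  rw [← bianchi hΩ hA a i j hx]
  unfold nR
  have e : ∀ (b c d : Fin n), ∑ m, A b x m c • Cv A d m x = - ∑ m, A c x m b • Cv A m d x := by
    intro b c d
    rw [← Finset.sum_neg_distrib]
    refine Finset.sum_congr rfl fun m _ => ?_
    rw [Cv_anti m d x, hsym b c m, smul_neg]
  rw [e a j i, e i a j, e j i a]
  abel

theorem nR_anti (hΩ : IsOpen Ω) (hA : ∀ i, MS Ω (A i)) (a i j : Fin n) {x} (hx : x ∈ Ω) :
    nR A a j i x = - nR A a i j x := by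
  have h : DM a (Cv A j i) x = - DM a (Cv A i j) x := by
    rw [DM_congr hΩ (fun y _ => Cv_anti i j y) a hx, DM_neg]
  unfold nR Ec
  have e : ∀ (c d : Fin n), ∑ m, A a x m c • Cv A d m x = - ∑ m, A a x m c • Cv A m d x := by
    intro c d
    rw [← Finset.sum_neg_distrib]
    refine Finset.sum_congr rfl fun m _ => ?_
    rw [Cv_anti m d x, smul_neg]
  rw [h, Cv_anti i j, e i j, e j i]
  noncomm_ring

/-- Ricci -/
def Rc (A : Fin n → (Fin n → ℝ) → Matrix (Fin n) (Fin n) ℝ) (y : Fin n → ℝ) :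
    Matrix (Fin n) (Fin n) ℝ := fun j k => ∑ p, Cv A p j y p k

/-- covariant derivative of a two-tensor -/
def N2 (A : Fin n → (Fin n → ℝ) → Matrix (Fin n) (Fin n) ℝ)
    (B : (Fin n → ℝ) → Matrix (Fin n) (Fin n) ℝ) (a : Fin n) (x : Fin n → ℝ) :
    Matrix (Fin n) (Fin n) ℝ := DM a B x - (A a x)ᵀ * B x - B x * A a x

theorem Rc_smooth (hΩ : IsOpen Ω) (hA : ∀ i, MS Ω (A i)) : MS Ω (Rc A) :=
  fun j k => Sm.sum _ fun p _ => Cv_smooth hΩ hA p j p k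

theorem nR_trace (hΩ : IsOpen Ω) (hA : ∀ i, MS Ω (A i)) (a j k : Fin n) {x} (hx : x ∈ Ω) :
    ∑ p, nR A a p j x p k = N2 A (Rc A) a x j k := by
  have h1 : DM a (Rc A) x j k = ∑ p, DM a (Cv A p j) x p k :=
    D_sum _ a fun p _ => (Cv_smooth hΩ hA p j p k).diff hΩ hx
  unfold nR Ec N2
  simp only [Matrix.sub_apply, Matrix.add_apply, Matrix.sum_apply, Matrix.smul_apply, smul_eq_mul,
    Matrix.mul_apply, Matrix.transpose_apply, h1, Rc, Finset.sum_sub_distrib, Finset.sum_add_distrib,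
    Finset.mul_sum, Finset.sum_mul]
  have e1 : ∑ p, ∑ m, A a x p m * Cv A p j x m k = ∑ p, ∑ m, A a x m p * Cv A m j x p k :=
    Finset.sum_comm
  have e2 : ∑ p, ∑ m, A a x m j * Cv A p m x p k = ∑ m, ∑ p, A a x m j * Cv A p m x p k :=
    Finset.sum_comm
  have e3 : ∑ p, ∑ m, Cv A p j x p m * A a x m k = ∑ m, ∑ p, Cv A p j x p m * A a x m k :=
    Finset.sum_comm
  rw [e1, e2, e3]; ring

/-- scalar curvature -/
def Sc (A : Fin n → (Fin n → ℝ) → Matrix (Fin n) (Fin n) ℝ)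
    (H : (Fin n → ℝ) → Matrix (Fin n) (Fin n) ℝ) (y : Fin n → ℝ) : ℝ :=
  ∑ j, ∑ k, H y j k * Rc A y j k

theorem D_Sc (hΩ : IsOpen Ω) (hA : ∀ i, MS Ω (A i)) (hH : MS Ω H)
    (hDH : ∀ i, ∀ y ∈ Ω, DM i H y = - (A i y * H y) - H y * (A i y)ᵀ)
    (a : Fin n) {x} (hx : x ∈ Ω) :
    D a (Sc A H) x = ∑ j, ∑ k, H x j k * N2 A (Rc A) a x j k := by
  have hR := Rc_smooth hΩ hA
  have h1 : D a (Sc A H) x = ∑ j, ∑ k, (DM a H x j k * Rc A x j k + H x j k * DM a (Rc A) x j k) := by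
    unfold Sc
    rw [D_sum _ _ fun j _ => (Sm.sum _ fun k _ => (hH j k).mul (hR j k)).diff hΩ hx]
    refine Finset.sum_congr rfl fun j _ => ?_
    rw [D_sum _ _ fun k _ => ((hH j k).mul (hR j k)).diff hΩ hx]
    exact Finset.sum_congr rfl fun k _ => D_mul a ((hH j k).diff hΩ hx) ((hR j k).diff hΩ hx)
  have tr : ∀ P Q : Matrix (Fin n) (Fin n) ℝ, ∑ j, ∑ k, P j k * Q j k = (P * Qᵀ).trace := by
    intro P Q; simp [Matrix.trace, Matrix.mul_apply]
  simp only [Finset.sum_add_distrib] at h1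
  rw [h1, tr, tr, tr, hDH a x hx]
  unfold N2
  simp only [Matrix.transpose_sub, Matrix.transpose_mul, Matrix.sub_mul, Matrix.mul_sub,
    Matrix.neg_mul, Matrix.trace_sub, Matrix.trace_neg, Matrix.transpose_transpose]
  rw [Matrix.mul_assoc (A a x), Matrix.trace_mul_comm (A a x), Matrix.mul_assoc, Matrix.mul_assoc]
  ring

/-- contracted second Bianchi identity -/
theorem contracted_bianchi (hΩ : IsOpen Ω) (hA : ∀ i, MS Ω (A i)) (hH : MS Ω H)
    (hDH : ∀ i, ∀ y ∈ Ω, DM i H y = - (A i y * H y) - H y * (A i y)ᵀ)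
    {x} (hx : x ∈ Ω) (hsym : ∀ i k l, A i x l k = A k x l i) (hHs : ∀ i j, H x i j = H x j i)
    (a : Fin n) :
    D a (Sc A H) x = 2 * ∑ p, ∑ k, H x p k * N2 A (Rc A) p x a k := by
  have c3 : ∀ j k, N2 A (Rc A) a x j k + ∑ p, nR A p j a x p k - N2 A (Rc A) j x a k = 0 := by
    intro j k
    rw [← nR_trace hΩ hA a j k hx, ← nR_trace hΩ hA j a k hx, ← Finset.sum_add_distrib,
      ← Finset.sum_sub_distrib]
    refine Finset.sum_eq_zero fun p _ => ?_
    have h := congrFun (congrFun (nR_bianchi hΩ hA hx hsym a p j) p) k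
    rw [nR_anti hΩ hA j p a hx] at h
    simp only [Matrix.add_apply, Matrix.neg_apply, Matrix.zero_apply] at h
    linarith
  have c4 : ∑ j, ∑ k, H x j k * ∑ p, nR A p j a x p k
      = - ∑ p, ∑ k, H x p k * N2 A (Rc A) p x a k := by
    have l1 : ∑ j, ∑ k, H x j k * ∑ p, nR A p j a x p k
        = ∑ j, ∑ p, (nR A p j a x * H x) p j := by
      refine Finset.sum_congr rfl fun j _ => ?_
      simp only [Matrix.mul_apply, Finset.mul_sum]
      rw [Finset.sum_comm]
      refine Finset.sum_congr rfl fun p _ => Finset.sum_congr rfl fun k _ => ?_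
      rw [hHs j k]; ring
    have l2 : ∀ p j, (nR A p j a x * H x) p j = - (nR A p j a x * H x) j p := by
      intro p j
      have h := congrFun (congrFun (nR_skew hΩ hA hH hDH p j a hx) p) j
      have h' : (H x * (nR A p j a x)ᵀ) p j = (nR A p j a x * H x) j p := by
        simp only [Matrix.mul_apply, Matrix.transpose_apply]
        exact Finset.sum_congr rfl fun k _ => by rw [hHs p k]; ring
      simp only [Matrix.add_apply, Matrix.zero_apply, h'] at h
      linarith
    rw [l1]
    simp only [l2, Finset.sum_neg_distrib]
    rw [Finset.sum_comm]
    congr 1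
    refine Finset.sum_congr rfl fun p _ => ?_
    simp only [Matrix.mul_apply]
    rw [Finset.sum_comm]
    refine Finset.sum_congr rfl fun k _ => ?_
    rw [← nR_trace hΩ hA p a k hx, Finset.mul_sum]
    exact Finset.sum_congr rfl fun j _ => by rw [hHs p k]; ring
  have c5 : ∑ j, ∑ k, H x j k * (N2 A (Rc A) a x j k + ∑ p, nR A p j a x p k
      - N2 A (Rc A) j x a k) = 0 :=
    Finset.sum_eq_zero fun j _ => Finset.sum_eq_zero fun k _ => by rw [c3, mul_zero]
  simp only [mul_sub, mul_add, Finset.sum_sub_distrib, Finset.sum_add_distrib] at c5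
  rw [c4, ← D_Sc hΩ hA hH hDH a hx] at c5
  linarith

end conn
end CCaux

namespace CCaux
open Matrix
variable {n : ℕ} {Ω : Set (Fin n → ℝ)}
section sol
variable {A : Fin n → (Fin n → ℝ) → Matrix (Fin n) (Fin n) ℝ}
  {H U X : (Fin n → ℝ) → Matrix (Fin n) (Fin n) ℝ}

/-- covariant derivative of a one-form, stored as a matrix with equal columns -/
def n1 (A : Fin n → (Fin n → ℝ) → Matrix (Fin n) (Fin n) ℝ)
    (X : (Fin n → ℝ) → Matrix (Fin n) (Fin n) ℝ) (k : Fin n) (x : Fin n → ℝ) :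
    Matrix (Fin n) (Fin n) ℝ := DM k X x - (A k x)ᵀ * X x

theorem n1_contract (hΩ : IsOpen Ω) (hH : MS Ω H) (hU : MS Ω U) (hX : MS Ω X)
    (hDH : ∀ i, ∀ y ∈ Ω, DM i H y = - (A i y * H y) - H y * (A i y)ᵀ)
    (hDU : ∀ i, ∀ y ∈ Ω, DM i U y = (A i y)ᵀ * U y + U y * A i y) (k : Fin n) {x} (hx : x ∈ Ω) :
    n1 A (fun y => -(U y * H y * X y)) k x = -(U x * H x * n1 A X k x) := by
  unfold n1
  rw [DM_neg, DM_mul hΩ (hU.mul hH) hX k hx, DM_mul hΩ hU hH k hx, hDH k x hx, hDU k x hx]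
  noncomm_ring

theorem N2_contract (hΩ : IsOpen Ω) (hA : ∀ i, MS Ω (A i)) (hH : MS Ω H) (hU : MS Ω U)
    (hDH : ∀ i, ∀ y ∈ Ω, DM i H y = - (A i y * H y) - H y * (A i y)ᵀ)
    (hDU : ∀ i, ∀ y ∈ Ω, DM i U y = (A i y)ᵀ * U y + U y * A i y) (k : Fin n) {x} (hx : x ∈ Ω) :
    N2 A (fun y => -(Rc A y * (U y * H y)ᵀ)) k x = -(N2 A (Rc A) k x * (U x * H x)ᵀ) := by
  unfold N2
  rw [DM_neg, DM_mul hΩ (Rc_smooth hΩ hA) (hU.mul hH).tr k hx, DM_tr,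
    DM_mul hΩ hU hH k hx, hDH k x hx, hDU k x hx]
  simp only [Matrix.transpose_add, Matrix.transpose_sub, Matrix.transpose_mul,
    Matrix.transpose_neg, Matrix.transpose_transpose]
  noncomm_ring

theorem N2_symm (hΩ : IsOpen Ω) {B : (Fin n → ℝ) → Matrix (Fin n) (Fin n) ℝ}
    (hs : ∀ y ∈ Ω, (B y)ᵀ = B y) (a : Fin n) {x} (hx : x ∈ Ω) :
    (N2 A B a x)ᵀ = N2 A B a x := by
  unfold N2
  have h1 : (DM a B x)ᵀ = DM a B x := by rw [← DM_tr, DM_congr hΩ hs a hx]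
  simp only [Matrix.transpose_sub, Matrix.transpose_mul, Matrix.transpose_transpose, h1, hs x hx]
  abel

theorem commutator (hΩ : IsOpen Ω) (hA : ∀ i, MS Ω (A i)) (hX : MS Ω X)
    (hsol : ∀ y ∈ Ω, ∀ j k b, Rc A y j k = n1 A X j y k b)
    {x} (hx : x ∈ Ω) (hsym : ∀ i k l, A i x l k = A k x l i) (i j k b : Fin n) :
    N2 A (Rc A) i x j k - N2 A (Rc A) j x i k = - ((Cv A i j x)ᵀ * X x) k b := by
  have h1 : ∀ i j, N2 A (Rc A) i x j k + ∑ m, A i x m j * Rc A x m k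
      = (DM i (n1 A X j) x - (A i x)ᵀ * n1 A X j x) k b := by
    intro i j
    have e1 : DM i (Rc A) x j k = DM i (n1 A X j) x k b :=
      D_congr hΩ (fun y hy => hsol y hy j k b) i hx
    have e2 : (Rc A x * A i x) j k = ((A i x)ᵀ * n1 A X j x) k b := by
      simp only [Matrix.mul_apply, Matrix.transpose_apply]
      exact Finset.sum_congr rfl fun m _ => by rw [hsol x hx j m b]; ring
    have e3 : ((A i x)ᵀ * Rc A x) j k = ∑ m, A i x m j * Rc A x m k := by
      simp only [Matrix.mul_apply, Matrix.transpose_apply]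
    simp only [N2, Matrix.sub_apply]
    rw [e1, e2, e3]; ring
  have h2 : ∀ i j, DM i (n1 A X j) x = DM i (DM j X) x
      - ((DM i (A j) x)ᵀ * X x + (A j x)ᵀ * DM i X x) := by
    intro i j
    unfold n1
    rw [DM_sub hΩ (hX.DM hΩ j) ((hA j).tr.mul hX) i hx, DM_mul hΩ (hA j).tr hX i hx, DM_tr]
  have h3 : (DM i (n1 A X j) x - (A i x)ᵀ * n1 A X j x) - (DM j (n1 A X i) x - (A j x)ᵀ * n1 A X i x)
      = - ((Cv A i j x)ᵀ * X x) := by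
    rw [h2, h2, DM_comm hΩ hX i j hx]
    unfold n1 Cv
    simp only [Matrix.transpose_add, Matrix.transpose_sub, Matrix.transpose_mul]
    noncomm_ring
  have h4 := congrFun (congrFun h3 k) b
  rw [Matrix.sub_apply, ← h1, ← h1] at h4
  have h5 : ∑ m, A j x m i * Rc A x m k = ∑ m, A i x m j * Rc A x m k :=
    Finset.sum_congr rfl fun m _ => by rw [hsym j i m]
  rw [h5] at h4
  rw [Matrix.neg_apply] at h4
  linarith

theorem lap_half (hΩ : IsOpen Ω) (hA : ∀ i, MS Ω (A i)) (hH : MS Ω H)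
    (hDH : ∀ i, ∀ y ∈ Ω, DM i H y = - (A i y * H y) - H y * (A i y)ᵀ)
    (hRs : ∀ y ∈ Ω, (Rc A y)ᵀ = Rc A y)
    {x} (hx : x ∈ Ω) (hsym : ∀ i k l, A i x l k = A k x l i) (hHs : ∀ i j, H x i j = H x j i)
    (j : Fin n) : ∑ p, ∑ q, H x p q * N2 A (Rc A) p x q j = 1 / 2 * D j (Sc A H) x := by
  rw [contracted_bianchi hΩ hA hH hDH hx hsym hHs j]
  have : ∀ p q, N2 A (Rc A) p x q j = N2 A (Rc A) p x j q := fun p q => by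
    conv_lhs => rw [← N2_symm hΩ hRs p hx]
    rfl
  simp only [this]; ring

theorem grad_half (hΩ : IsOpen Ω) (hA : ∀ i, MS Ω (A i)) (hH : MS Ω H) (hX : MS Ω X)
    (hDH : ∀ i, ∀ y ∈ Ω, DM i H y = - (A i y * H y) - H y * (A i y)ᵀ)
    (hsol : ∀ y ∈ Ω, ∀ j k b, Rc A y j k = n1 A X j y k b)
    {x} (hx : x ∈ Ω) (hsym : ∀ i k l, A i x l k = A k x l i) (hHs : ∀ i j, H x i j = H x j i)
    (i b : Fin n) : 1 / 2 * D i (Sc A H) x = - (Rc A x * H x * X x) i b := by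
  have hb := contracted_bianchi hΩ hA hH hDH hx hsym hHs i
  have hd := D_Sc hΩ hA hH hDH i hx
  have hc : ∑ j, ∑ k, H x j k * (N2 A (Rc A) i x j k - N2 A (Rc A) j x i k)
      = - ∑ l, (∑ j, (Cv A i j x * H x) l j) * X x l b := by
    simp only [commutator hΩ hA hX hsol hx hsym i _ _ b, mul_neg, Finset.sum_neg_distrib]
    congr 1
    simp only [Matrix.mul_apply, Matrix.transpose_apply, Finset.mul_sum, Finset.sum_mul]
    rw [Finset.sum_comm' (t' := Finset.univ) (s' := fun _ => Finset.univ) (by simp)]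
    have : ∀ k, ∑ j, ∑ l, H x j k * (Cv A i j x l k * X x l b)
      = ∑ l, ∑ j, H x j k * (Cv A i j x l k * X x l b) := fun k => Finset.sum_comm
    simp only [this]
    rw [Finset.sum_comm]
    refine Finset.sum_congr rfl fun l _ => ?_
    rw [Finset.sum_comm]
    refine Finset.sum_congr rfl fun j _ => Finset.sum_congr rfl fun k _ => ?_
    rw [hHs j k]; ring
  have hf : ∀ l, ∑ j, (Cv A i j x * H x) l j = (Rc A x * H x) i l := by
    intro l
    have l2 : ∀ j, (Cv A i j x * H x) l j = (Cv A j i x * H x) j l := by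
      intro j
      have h := congrFun (congrFun (curv_skew hΩ hA hH hDH i j hx) l) j
      have h' : (H x * (Cv A i j x)ᵀ) l j = (Cv A i j x * H x) j l := by
        simp only [Matrix.mul_apply, Matrix.transpose_apply]
        exact Finset.sum_congr rfl fun k _ => by rw [hHs l k]; ring
      rw [Cv_anti i j, Matrix.neg_mul, Matrix.neg_apply]
      simp only [Matrix.add_apply, Matrix.zero_apply, h'] at h
      linarith
    simp only [l2]
    simp only [Matrix.mul_apply, Rc, Finset.sum_mul]
    rw [Finset.sum_comm]
  simp only [hf] at hc
  rw [← Matrix.mul_apply] at hc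
  simp only [mul_sub, Finset.sum_sub_distrib] at hc
  rw [← hd] at hc
  linarith
end sol

/-! smoothness of the inverse -/
section inv
variable {F : Type} [NormedAddCommGroup F] [NormedSpace ℝ F] {S : Set F}

theorem det_smooth {M : F → Matrix (Fin n) (Fin n) ℝ}
    (h : ∀ i j, ContDiffOn ℝ (⊤ : ℕ∞) (fun y => M y i j) S) :
    ContDiffOn ℝ (⊤ : ℕ∞) (fun y => (M y).det) S := by
  simp only [Matrix.det_apply']
  exact ContDiffOn.sum fun σ _ => contDiffOn_const.mul (contDiffOn_prod fun i _ => h _ _)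

theorem inv_smooth {M N : F → Matrix (Fin n) (Fin n) ℝ}
    (h : ∀ i j, ContDiffOn ℝ (⊤ : ℕ∞) (fun y => M y i j) S)
    (hMN : ∀ y ∈ S, M y * N y = 1) (i j : Fin n) :
    ContDiffOn ℝ (⊤ : ℕ∞) (fun y => N y i j) S := by
  have h1 : ContDiffOn ℝ (⊤ : ℕ∞) (fun y => ((M y).det)⁻¹ * (M y).adjugate i j) S := by
    refine ContDiffOn.mul (ContDiffOn.inv (det_smooth h) ?_) ?_
    · intro y hy h0
      have := congrArg Matrix.det (hMN y hy)
      rw [Matrix.det_mul, h0] at this; simp at this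
    · simp only [Matrix.adjugate_apply]
      refine det_smooth fun a b => ?_
      simp only [Matrix.updateRow_apply]
      by_cases hab : a = j
      · simp only [hab, if_true]; exact contDiffOn_const
      · simp only [hab, if_false]; exact h a b
  refine h1.congr fun y hy => ?_
  rw [← Matrix.inv_eq_right_inv (hMN y hy), Matrix.inv_def]
  simp
end inv

/-! time derivatives -/
def dT (M : ℝ → Matrix (Fin n) (Fin n) ℝ) (t : ℝ) : Matrix (Fin n) (Fin n) ℝ :=
  fun a b => deriv (fun s => M s a b) t

def TD (M : ℝ → Matrix (Fin n) (Fin n) ℝ) (t : ℝ) : Prop :=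
  ∀ a b, DifferentiableAt ℝ (fun s => M s a b) t

theorem TD.mul {M N : ℝ → Matrix (Fin n) (Fin n) ℝ} {t : ℝ} (h : TD M t) (h' : TD N t) :
    TD (fun s => M s * N s) t := by
  intro a b
  simp only [Matrix.mul_apply]
  exact DifferentiableAt.fun_sum fun k _ => (h a k).mul (h' k b)

theorem dT_mul {M N : ℝ → Matrix (Fin n) (Fin n) ℝ} {t : ℝ} (h : TD M t) (h' : TD N t) :
    dT (fun s => M s * N s) t = dT M t * N t + M t * dT N t := by
  ext a b
  simp only [dT, Matrix.mul_apply, Matrix.add_apply]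
  rw [deriv_fun_sum fun k _ => (h a k).fun_mul (h' k b), ← Finset.sum_add_distrib]
  exact Finset.sum_congr rfl fun k _ => deriv_fun_mul (h a k) (h' k b)

theorem deriv_zero_of_Ioo {f : ℝ → ℝ} {T : ℝ} (hc : ContinuousOn f (Set.Ico 0 T))
    (hd : ∀ t ∈ Set.Ioo 0 T, DifferentiableAt ℝ f t ∧ deriv f t = 0) :
    ∀ t ∈ Set.Ico 0 T, deriv f t = 0 := by
  intro t ht
  rcases eq_or_lt_of_le ht.1 with h0 | h0
  swap
  · exact (hd t ⟨h0, ht.2⟩).2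
  subst h0
  by_cases hdf : DifferentiableAt ℝ f 0
  swap
  · exact deriv_zero_of_not_differentiableAt hdf
  have hconst : ∀ s ∈ Set.Ico 0 T, f s = f 0 := by
    intro s hs
    rcases eq_or_lt_of_le hs.1 with h1 | h1
    · rw [← h1]
    obtain ⟨c, hc1, hc2⟩ := exists_deriv_eq_slope f h1
      (hc.mono fun u hu => ⟨hu.1, lt_of_le_of_lt hu.2 hs.2⟩)
      (fun u hu => (hd u ⟨hu.1, hu.2.trans hs.2⟩).1.differentiableWithinAt)
    rw [(hd c ⟨hc1.1, hc1.2.trans hs.2⟩).2, eq_comm, div_eq_zero_iff] at hc2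
    rcases hc2 with h | h <;> linarith
  have hw : HasDerivWithinAt f (deriv f 0) (Set.Ico 0 T) 0 := hdf.hasDerivAt.hasDerivWithinAt
  have hz : HasDerivWithinAt f 0 (Set.Ico 0 T) 0 :=
    (hasDerivWithinAt_const (0:ℝ) (Set.Ico 0 T) (f 0)).congr hconst rfl
  exact (uniqueDiffOn_Ico 0 T 0 ht).eq_deriv _ hw hz
end CCaux

namespace CCaux
open Matrix CC
variable {n : ℕ}

/-- connection matrices at time t -/
def At (g ginv : Met n) (t : ℝ) (i : Fin n) (y : Fin n → ℝ) : Matrix (Fin n) (Fin n) ℝ :=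
  fun l k => Gamma g ginv l i k y t

/-- two-tensor at time t -/
def Mt2 (g : Fin n → Fin n → Fld n) (t : ℝ) (y : Fin n → ℝ) : Matrix (Fin n) (Fin n) ℝ :=
  fun i j => g i j y t

/-- one-form at time t, with equal columns -/
def Vt (V : Fin n → Fld n) (t : ℝ) (y : Fin n → ℝ) : Matrix (Fin n) (Fin n) ℝ :=
  fun i _ => V i y t

theorem Cv_eq (g ginv : Met n) (t : ℝ) (i j l k : Fin n) (y) :
    Cv (At g ginv t) i j y l k = Riem g ginv l i j k y t := by
  unfold Cv Riem
  simp only [Matrix.add_apply, Matrix.sub_apply, Matrix.mul_apply, Finset.sum_sub_distrib]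
  have e : ∀ a b : Fin n, ∑ m, At g ginv t a y l m * At g ginv t b y m k
      = ∑ m, Gamma g ginv m b k y t * Gamma g ginv l a m y t :=
    fun a b => Finset.sum_congr rfl fun m _ => mul_comm _ _
  rw [e, e]; rfl

theorem Rc_eq (g ginv : Met n) (t : ℝ) (j k : Fin n) (y) :
    Rc (At g ginv t) y j k = Ric g ginv j k y t := by
  unfold Rc Ric; simp only [Cv_eq]

theorem Sc_eq (g ginv : Met n) (t : ℝ) :
    Sc (At g ginv t) (Mt2 ginv t) = fun y => Scal g ginv y t := by
  funext y; unfold Sc Scal; simp only [Rc_eq]; rfl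

theorem n1_eq (g ginv : Met n) (V : Fin n → Fld n) (t : ℝ) (i j b : Fin n) (y) :
    n1 (At g ginv t) (Vt V t) i y j b = cd1 g ginv i V j y t := by
  unfold n1 cd1
  simp only [Matrix.sub_apply, Matrix.mul_apply, Matrix.transpose_apply]
  rfl

theorem N2_eq (g ginv : Met n) (B : Fin n → Fin n → Fld n) (t : ℝ) (i j k : Fin n) (y) :
    N2 (At g ginv t) (Mt2 B t) i y j k = cd2 g ginv i B j k y t := by
  unfold N2 cd2
  simp only [Matrix.sub_apply, Matrix.mul_apply, Matrix.transpose_apply]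
  congr 1
  exact Finset.sum_congr rfl fun m _ => mul_comm _ _

theorem lap1_eq {Ω : Set (Fin n → ℝ)} (hΩ : IsOpen Ω) (g ginv : Met n) (V : Fin n → Fld n) (t : ℝ)
    (B : (Fin n → ℝ) → Matrix (Fin n) (Fin n) ℝ)
    (hB : ∀ y ∈ Ω, ∀ q j, cd1 g ginv q V j y t = B y q j) {x} (hx : x ∈ Ω) (j : Fin n) :
    lap1 g ginv V j x t = ∑ p, ∑ q, ginv p q x t * N2 (At g ginv t) B p x q j := by
  unfold lap1
  refine Finset.sum_congr rfl fun p _ => Finset.sum_congr rfl fun q _ => ?_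
  congr 1
  have e1 : spd p (cd1 g ginv q V j) x t = DM p B x q j :=
    D_congr hΩ (fun y hy => hB y hy q j) p hx
  unfold N2
  simp only [Matrix.sub_apply, Matrix.mul_apply, Matrix.transpose_apply, hB x hx, e1]
  congr 1
  exact Finset.sum_congr rfl fun m _ => mul_comm _ _

theorem lap02_zero {Ω : Set (Fin n → ℝ)} (hΩ : IsOpen Ω) (g ginv : Met n)
    (U : Fin n → Fin n → Fld n) (t : ℝ)
    (hU : ∀ y ∈ Ω, ∀ k i j, cd2 g ginv k U i j y t = 0) {x} (hx : x ∈ Ω) (i j : Fin n) :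
    lap02 g ginv U i j x t = 0 := by
  unfold lap02
  refine Finset.sum_eq_zero fun p _ => Finset.sum_eq_zero fun q _ => ?_
  have e1 : spd p (cd2 g ginv q U i j) x t = 0 :=
    (D_congr hΩ (fun y hy => hU y hy q i j) p hx).trans (D_const p 0)
  simp [e1, hU x hx]

theorem slice_smooth {Ω : Set (Fin n → ℝ)} {T : ℝ} {u : Fld n}
    (h : ContDiffOn ℝ (⊤ : ℕ∞) (fun p : (Fin n → ℝ) × ℝ => u p.1 p.2) (Ω ×ˢ Set.Ico 0 T))
    {t : ℝ} (ht : t ∈ Set.Ico 0 T) : Sm Ω (fun y => u y t) := by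
  have : ContDiffOn ℝ (⊤ : ℕ∞) (fun y : Fin n → ℝ => (y, t)) Ω :=
    (contDiff_id.prodMk contDiff_const).contDiffOn
  exact h.comp this fun y hy => ⟨hy, ht⟩

theorem time_cont {Ω : Set (Fin n → ℝ)} {T : ℝ} {u : Fld n}
    (h : ContDiffOn ℝ (⊤ : ℕ∞) (fun p : (Fin n → ℝ) × ℝ => u p.1 p.2) (Ω ×ˢ Set.Ico 0 T))
    {x} (hx : x ∈ Ω) : ContinuousOn (fun s => u x s) (Set.Ico 0 T) := by
  have : ContinuousOn (fun s : ℝ => (x, s)) (Set.Ico 0 T) := by fun_prop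
  exact h.continuousOn.comp this fun s hs => ⟨hx, hs⟩

theorem time_diff {Ω : Set (Fin n → ℝ)} {T : ℝ} (hΩ : IsOpen Ω) {u : Fld n}
    (h : ContDiffOn ℝ (⊤ : ℕ∞) (fun p : (Fin n → ℝ) × ℝ => u p.1 p.2) (Ω ×ˢ Set.Ico 0 T))
    {x} (hx : x ∈ Ω) {t : ℝ} (ht : t ∈ Set.Ioo 0 T) : DifferentiableAt ℝ (fun s => u x s) t := by
  have hn : Ω ×ˢ Set.Ico 0 T ∈ nhds (x, t) :=
    prod_mem_nhds (hΩ.mem_nhds hx) (Ico_mem_nhds ht.1 ht.2)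
  have h1 : DifferentiableAt ℝ (fun p : (Fin n → ℝ) × ℝ => u p.1 p.2) (x, t) :=
    (h.contDiffAt hn).differentiableAt (by simp)
  have h2 : DifferentiableAt ℝ (fun s : ℝ => (x, s)) t := by fun_prop
  exact h1.comp t h2

section flow
variable {Ω : Set (Fin n → ℝ)} {T : ℝ} {g ginv : Met n}

theorem GH (hg : RicciFlow Ω T g ginv) {t : ℝ} (ht : t ∈ Set.Ico 0 T) {y} (hy : y ∈ Ω) :
    Mt2 g t y * Mt2 ginv t y = 1 := by
  ext i j
  rw [Matrix.mul_apply, Matrix.one_apply]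
  exact (hg.2.2.2.2 y hy t ht).2.2.1 i j

theorem HG (hg : RicciFlow Ω T g ginv) {t : ℝ} (ht : t ∈ Set.Ico 0 T) {y} (hy : y ∈ Ω) :
    Mt2 ginv t y * Mt2 g t y = 1 := mul_eq_one_comm.mp (GH hg ht hy)

theorem Gs (hg : RicciFlow Ω T g ginv) {t : ℝ} (ht : t ∈ Set.Ico 0 T) {y} (hy : y ∈ Ω) :
    (Mt2 g t y)ᵀ = Mt2 g t y := by
  ext i j; exact (hg.2.2.2.2 y hy t ht).1 j i

theorem Hs (hg : RicciFlow Ω T g ginv) {t : ℝ} (ht : t ∈ Set.Ico 0 T) {y} (hy : y ∈ Ω) :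
    (Mt2 ginv t y)ᵀ = Mt2 ginv t y := by
  rw [← Matrix.inv_eq_right_inv (GH hg ht hy), Matrix.transpose_nonsing_inv, Gs hg ht hy]

theorem ginv_smooth (hg : RicciFlow Ω T g ginv) (i j : Fin n) :
    ContDiffOn ℝ (⊤ : ℕ∞) (fun p : (Fin n → ℝ) × ℝ => ginv i j p.1 p.2) (Ω ×ˢ Set.Ico 0 T) :=
  inv_smooth (M := fun p : (Fin n → ℝ) × ℝ => Mt2 g p.2 p.1) (N := fun p => Mt2 ginv p.2 p.1)
    hg.2.2.2.1 (fun p hp => GH hg hp.2 hp.1) i j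

theorem A_smooth (hg : RicciFlow Ω T g ginv) {t : ℝ} (ht : t ∈ Set.Ico 0 T) (i : Fin n) :
    MS Ω (At g ginv t i) := by
  intro l k
  have hG : ∀ a b, Sm Ω (fun y => g a b y t) := fun a b => slice_smooth (hg.2.2.2.1 a b) ht
  have hH : ∀ a b, Sm Ω (fun y => ginv a b y t) := fun a b => slice_smooth (ginv_smooth hg a b) ht
  exact (Sm.const (1/2)).mul (Sm.sum _ fun m _ => (hH l m).mul
    ((((hG k m).D hg.1 i).add ((hG i m).D hg.1 k)).sub ((hG i k).D hg.1 m)))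

theorem D_g (hg : RicciFlow Ω T g ginv) {t : ℝ} (ht : t ∈ Set.Ico 0 T) (i a b : Fin n)
    {y} (hy : y ∈ Ω) : spd i (g a b) y t = spd i (g b a) y t :=
  D_congr hg.1 (fun z hz => (hg.2.2.2.2 z hz t ht).1 a b) i hy

theorem A_sym (hg : RicciFlow Ω T g ginv) {t : ℝ} (ht : t ∈ Set.Ico 0 T) {y} (hy : y ∈ Ω)
    (i k l : Fin n) : At g ginv t i y l k = At g ginv t k y l i := by
  unfold At Gamma
  congr 1
  refine Finset.sum_congr rfl fun m _ => ?_
  rw [D_g hg ht m i k hy]; ring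

theorem D_G (hg : RicciFlow Ω T g ginv) {t : ℝ} (ht : t ∈ Set.Ico 0 T) (i : Fin n)
    {y} (hy : y ∈ Ω) : DM i (Mt2 g t) y
      = (At g ginv t i y)ᵀ * Mt2 g t y + Mt2 g t y * At g ginv t i y := by
  have h1 : ∀ l k, (Mt2 g t y * At g ginv t i y) l k =
      1 / 2 * (spd i (g k l) y t + spd k (g i l) y t - spd l (g i k) y t) := by
    intro l k
    have hA : At g ginv t i y = Mt2 ginv t y * Matrix.of (fun m k => 1 / 2 *
        (spd i (g k m) y t + spd k (g i m) y t - spd m (g i k) y t)) := by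
      ext a b
      simp only [At, Gamma, Matrix.mul_apply, Finset.mul_sum, Matrix.of_apply]
      refine Finset.sum_congr rfl fun m _ => ?_
      simp only [Mt2]; ring
    rw [hA, ← Matrix.mul_assoc, GH hg ht hy, Matrix.one_mul, Matrix.of_apply]
  have h2 : (At g ginv t i y)ᵀ * Mt2 g t y = (Mt2 g t y * At g ginv t i y)ᵀ := by
    rw [Matrix.transpose_mul, Gs hg ht hy]
  rw [h2]
  ext a b
  rw [Matrix.add_apply, Matrix.transpose_apply, h1, h1]
  have : DM i (Mt2 g t) y a b = spd i (g a b) y t := rfl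
  rw [this, D_g hg ht i b a hy]; ring

theorem MS_of {B : Fin n → Fin n → Fld n} (hB : ∀ i j, ContDiffOn ℝ (⊤ : ℕ∞)
      (fun p : (Fin n → ℝ) × ℝ => B i j p.1 p.2) (Ω ×ˢ Set.Ico 0 T))
    {t : ℝ} (ht : t ∈ Set.Ico 0 T) : MS Ω (Mt2 B t) := fun a b => slice_smooth (hB a b) ht

theorem D_H (hg : RicciFlow Ω T g ginv) {t : ℝ} (ht : t ∈ Set.Ico 0 T) (i : Fin n)
    {y} (hy : y ∈ Ω) : DM i (Mt2 ginv t) y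
      = - (At g ginv t i y * Mt2 ginv t y) - Mt2 ginv t y * (At g ginv t i y)ᵀ := by
  have hH := MS_of (ginv_smooth hg) ht
  have hG := MS_of hg.2.2.2.1 ht
  have h0 : DM i (fun z => Mt2 ginv t z * Mt2 g t z) y = 0 := by
    rw [DM_congr hg.1 (N := fun _ => 1) (fun z hz => HG hg ht hz) i hy]
    ext b c; exact D_const i _
  rw [DM_mul hg.1 hH hG i hy, D_G hg ht i hy] at h0
  have h1 : DM i (Mt2 ginv t) y = DM i (Mt2 ginv t) y * (Mt2 g t y * Mt2 ginv t y) := by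
    rw [GH hg ht hy, Matrix.mul_one]
  have h2 := eq_neg_of_add_eq_zero_left h0
  rw [h1, ← Matrix.mul_assoc, h2]
  set H := Mt2 ginv t y
  set G := Mt2 g t y
  set a := At g ginv t i y
  have e1 : H * G = 1 := HG hg ht hy
  have e2 : G * H = 1 := GH hg ht hy
  calc -(H * (aᵀ * G + G * a)) * H = -(H * aᵀ * (G * H)) - (H * G) * a * H := by noncomm_ring
    _ = _ := by rw [e1, e2]; noncomm_ring

theorem dT_H (hg : RicciFlow Ω T g ginv) {x} (hx : x ∈ Ω) {t : ℝ} (ht : t ∈ Set.Ioo 0 T) :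
    dT (fun s => Mt2 ginv s x) t
      = 2 • (Mt2 ginv t x * Rc (At g ginv t) x * Mt2 ginv t x) := by
  have ht' : t ∈ Set.Ico 0 T := ⟨ht.1.le, ht.2⟩
  have hH : TD (fun s => Mt2 ginv s x) t := fun a b => time_diff hg.1 (ginv_smooth hg a b) hx ht
  have hG : TD (fun s => Mt2 g s x) t := fun a b => time_diff hg.1 (hg.2.2.2.1 a b) hx ht
  have h0 : dT (fun s => Mt2 ginv s x * Mt2 g s x) t = 0 := by
    ext a b
    have : (fun s => (Mt2 ginv s x * Mt2 g s x) a b) =ᶠ[nhds t]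
        fun _ => (1 : Matrix (Fin n) (Fin n) ℝ) a b := by
      filter_upwards [Ico_mem_nhds ht.1 ht.2] with s hs
      rw [HG hg hs hx]
    unfold dT
    rw [this.deriv_eq]; simp
  have hdG : dT (fun s => Mt2 g s x) t = -(2 • Rc (At g ginv t) x) := by
    ext a b
    have := (hg.2.2.2.2 x hx t ht').2.2.2 a b
    simp only [Matrix.neg_apply, Matrix.smul_apply, Rc_eq]
    refine Eq.trans this ?_
    simp
  rw [dT_mul hH hG, hdG] at h0
  have h1 : dT (fun s => Mt2 ginv s x) t
      = dT (fun s => Mt2 ginv s x) t * (Mt2 g t x * Mt2 ginv t x) := by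
    rw [GH hg ht' hx, Matrix.mul_one]
  rw [h1, ← Matrix.mul_assoc, eq_neg_of_add_eq_zero_left h0]
  noncomm_ring
end flow
end CCaux

open CCaux Matrix

/-- equations (2.12), (2.14) of Chow–Chu. On a Ricci-flow
soliton background, if `U` is parallel, antisymmetric and satisfies the heat
equation, then `W = U ⌟ V` satisfies `∇_k W_i = −U_{ij}g^{jl}R_{kl}` and
`∂W_i/∂t = ΔW_i + ½ g^{pq} ∂_p R · U_{iq}`. -/
theorem contraction_soliton_equations (n : ℕ) (hn : 2 ≤ n)
    (Ωs : Set (Fin n → ℝ)) (T : ℝ)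
    (g ginv : CC.Met n) (hg : CC.RicciFlow Ωs T g ginv)
    (V : Fin n → CC.Fld n)
    (hVsm : ∀ j, ContDiffOn ℝ (⊤ : ℕ∞)
      (fun p : (Fin n → ℝ) × ℝ => V j p.1 p.2) (Ωs ×ˢ Set.Ico 0 T))
    (hclosed : ∀ x ∈ Ωs, ∀ t ∈ Set.Ico (0:ℝ) T, ∀ i j,
      CC.cd1 g ginv i V j x t = CC.cd1 g ginv j V i x t)
    (hsoliton : ∀ x ∈ Ωs, ∀ t ∈ Set.Ico (0:ℝ) T, ∀ i j,
      CC.Ric g ginv i j x t = CC.cd1 g ginv i V j x t)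
    (hVev : ∀ x ∈ Ωs, ∀ t ∈ Set.Ico (0:ℝ) T, ∀ j,
      CC.tpd (V j) x t =
        CC.lap1 g ginv V j x t
        - ∑ l, ∑ m, CC.Ric g ginv j l x t * ginv l m x t * V m x t)
    (U : Fin n → Fin n → CC.Fld n)
    (hUsm : ∀ i j, ContDiffOn ℝ (⊤ : ℕ∞)
      (fun p : (Fin n → ℝ) × ℝ => U i j p.1 p.2) (Ωs ×ˢ Set.Ico 0 T))
    (hUanti : ∀ x ∈ Ωs, ∀ t ∈ Set.Ico (0:ℝ) T, ∀ i j, U i j x t = - U j i x t)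
    (hUpar : ∀ x ∈ Ωs, ∀ t ∈ Set.Ico (0:ℝ) T, ∀ k i j,
      CC.cd2 g ginv k U i j x t = 0)
    (hUheat : ∀ x ∈ Ωs, ∀ t ∈ Set.Ico (0:ℝ) T, ∀ i j,
      CC.tpd (U i j) x t = CC.lap02 g ginv U i j x t)
    (W : Fin n → CC.Fld n)
    (hW : ∀ i, W i = fun x t => -(∑ j, ∑ k, U i j x t * ginv j k x t * V k x t)) :
    ∀ x ∈ Ωs, ∀ t ∈ Set.Ico (0:ℝ) T,
      -- (a)  `∇_k W_i = −U_{ij} g^{jl} R_{kl}`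
      (∀ k i : Fin n,
        CC.cd1 g ginv k W i x t =
          -(∑ j, ∑ l, U i j x t * ginv j l x t * CC.Ric g ginv k l x t)) ∧
      -- (b)  `∂W_i/∂t = ΔW_i + ½ g^{pq} ∂_p R · U_{iq}`
      (∀ i : Fin n,
        CC.tpd (W i) x t =
          CC.lap1 g ginv W i x t
          + (1/2) * ∑ p, ∑ q, ginv p q x t * CC.spd p (CC.Scal g ginv) x t * U i q x t) := by
  intro x hx t ht
  have hΩ := hg.1
  have hWt : ∀ s, Vt W s = fun y => -(Mt2 U s y * Mt2 ginv s y * Vt V s y) := by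
    intro s
    funext y
    ext a b
    have : Vt W s y a b = W a y s := rfl
    rw [this, hW a]
    simp only [Matrix.neg_apply, Matrix.mul_apply, Finset.sum_mul]
    rw [Finset.sum_comm]
    rfl
  have hAs := fun {s : ℝ} (hs : s ∈ Set.Ico 0 T) => A_smooth hg hs
  have hHsm := fun {s : ℝ} (hs : s ∈ Set.Ico 0 T) => MS_of (ginv_smooth hg) hs
  have hUm := fun {s : ℝ} (hs : s ∈ Set.Ico 0 T) => MS_of hUsm hs
  have hVm : ∀ {s : ℝ}, s ∈ Set.Ico 0 T → MS Ωs (Vt V s) :=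
    fun hs a _ => slice_smooth (hVsm a) hs
  have hDH := fun {s : ℝ} (hs : s ∈ Set.Ico 0 T) =>
    fun (i : Fin n) (y : Fin n → ℝ) (hy : y ∈ Ωs) => D_H hg hs i hy
  have hDU : ∀ {s : ℝ}, s ∈ Set.Ico 0 T → ∀ i, ∀ y ∈ Ωs, DM i (Mt2 U s) y
      = (At g ginv s i y)ᵀ * Mt2 U s y + Mt2 U s y * At g ginv s i y := by
    intro s hs i y hy
    have : N2 (At g ginv s) (Mt2 U s) i y = 0 := by
      ext a b; rw [N2_eq]; exact hUpar y hy s hs i a b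
    unfold N2 at this
    rw [sub_sub] at this
    exact sub_eq_zero.mp this
  have hsol : ∀ {s : ℝ}, s ∈ Set.Ico 0 T → ∀ y ∈ Ωs, ∀ j k b,
      Rc (At g ginv s) y j k = n1 (At g ginv s) (Vt V s) j y k b := by
    intro s hs y hy j k b
    rw [Rc_eq, n1_eq]; exact hsoliton y hy s hs j k
  have hRs : ∀ {s : ℝ}, s ∈ Set.Ico 0 T → ∀ y ∈ Ωs,
      (Rc (At g ginv s) y)ᵀ = Rc (At g ginv s) y := by
    intro s hs y hy
    ext a b
    rw [Matrix.transpose_apply, Rc_eq, Rc_eq, hsoliton y hy s hs, hsoliton y hy s hs,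
      hclosed y hy s hs]
  have hHs : ∀ {s : ℝ}, s ∈ Set.Ico 0 T → ∀ y ∈ Ωs, ∀ i j,
      Mt2 ginv s y i j = Mt2 ginv s y j i := by
    intro s hs y hy i j
    have := congrFun (congrFun (Hs hg hs hy) j) i
    exact this
  have ha : ∀ {s : ℝ}, s ∈ Set.Ico 0 T → ∀ y ∈ Ωs, ∀ k i : Fin n,
      CC.cd1 g ginv k W i y s =
        (-(Rc (At g ginv s) y * (Mt2 U s y * Mt2 ginv s y)ᵀ)) k i := by
    intro s hs y hy k i
    rw [← n1_eq g ginv W s k i i, hWt s,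
      n1_contract hΩ (hHsm hs) (hUm hs) (hVm hs) (hDH hs) (hDU hs) k hy]
    rw [Matrix.neg_apply, Matrix.neg_apply]
    congr 1
    rw [Matrix.mul_apply, Matrix.mul_apply]
    refine Finset.sum_congr rfl fun l _ => ?_
    rw [Matrix.transpose_apply, hsol hs y hy k l i, mul_comm]
  refine ⟨?_, ?_⟩
  · intro k i
    rw [ha ht x hx k i, Matrix.neg_apply]
    congr 1
    simp only [Matrix.mul_apply, Matrix.transpose_apply, Finset.mul_sum, Rc_eq]
    rw [Finset.sum_comm]
    refine Finset.sum_congr rfl fun j _ => Finset.sum_congr rfl fun l _ => ?_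
    simp only [Mt2]; ring
  intro i
  have hlap : ∀ {s : ℝ}, s ∈ Set.Ico 0 T → ∀ j,
      ∑ p, ∑ q, ginv p q x s * N2 (At g ginv s) (Rc (At g ginv s)) p x q j
        = 1 / 2 * CC.spd j (CC.Scal g ginv) x s := by
    intro s hs j
    have h := lap_half hΩ (hAs hs) (hHsm hs) (hDH hs) (hRs hs) hx (A_sym hg hs hx)
      (hHs hs x hx) j
    rw [Sc_eq] at h
    exact h
  have hrhs : CC.lap1 g ginv W i x t
      + (1/2) * ∑ p, ∑ q, ginv p q x t * CC.spd p (CC.Scal g ginv) x t * U i q x t = 0 := by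
    rw [lap1_eq hΩ g ginv W t _ (fun y hy q j => ha ht y hy q j) hx i]
    simp only [N2_contract hΩ (hAs ht) (hHsm ht) (hUm ht) (hDH ht) (hDU ht) _ hx]
    have e1 : ∑ p, ∑ q, ginv p q x t * (-(N2 (At g ginv t) (Rc (At g ginv t)) p x *
        (Mt2 U t x * Mt2 ginv t x)ᵀ)) q i
        = - ∑ l, (1 / 2 * CC.spd l (CC.Scal g ginv) x t) * (Mt2 U t x * Mt2 ginv t x) i l := by
      simp only [← hlap ht, Matrix.neg_apply, mul_neg, Finset.sum_neg_distrib]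
      congr 1
      simp only [Matrix.mul_apply (M := N2 _ _ _ _), Matrix.transpose_apply, Finset.mul_sum,
        Finset.sum_mul]
      have : ∀ p, ∑ q, ∑ l, ginv p q x t * (N2 (At g ginv t) (Rc (At g ginv t)) p x q l *
          (Mt2 U t x * Mt2 ginv t x) i l) = ∑ l, ∑ q, ginv p q x t *
          (N2 (At g ginv t) (Rc (At g ginv t)) p x q l * (Mt2 U t x * Mt2 ginv t x) i l) :=
        fun p => Finset.sum_comm
      simp only [this]
      rw [Finset.sum_comm]
      simp only [mul_assoc]
    rw [e1]
    simp only [Matrix.mul_apply, Finset.mul_sum]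
    rw [neg_add_eq_zero]
    refine Finset.sum_congr rfl fun l _ => Finset.sum_congr rfl fun q _ => ?_
    have := hHs ht x hx q l
    rw [this]
    simp only [Mt2]; ring
  rw [hrhs]
  have hWeq : ∀ s, W i x s = -(Mt2 U s x * Mt2 ginv s x * Vt V s x) i i := by
    intro s
    have := congrFun (congrFun (congrFun (hWt s) x) i) i
    exact this
  refine deriv_zero_of_Ioo (f := fun s => W i x s) (T := T) ?_ ?_ t ht
  · simp only [hW i]
    refine ContinuousOn.neg (continuousOn_finsetSum _ fun j _ => continuousOn_finsetSum _ fun k _ => ?_)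
    exact ((time_cont (hUsm i j) hx).mul (time_cont (ginv_smooth hg j k) hx)).mul
      (time_cont (hVsm k) hx)
  · intro s hs
    have hs' : s ∈ Set.Ico 0 T := ⟨hs.1.le, hs.2⟩
    have tU : TD (fun s => Mt2 U s x) s := fun a b => time_diff hΩ (hUsm a b) hx hs
    have tH : TD (fun s => Mt2 ginv s x) s := fun a b => time_diff hΩ (ginv_smooth hg a b) hx hs
    have tV : TD (fun s => Vt V s x) s := fun a _ => time_diff hΩ (hVsm a) hx hs
    have tUH := tU.mul tH
    have tall := tUH.mul tV
    have dU : dT (fun s => Mt2 U s x) s = 0 := by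
      ext a b
      exact (hUheat x hx s hs' a b).trans
        (lap02_zero hΩ g ginv U s (fun y hy => hUpar y hy s hs') hx a b)
    have dV : dT (fun s => Vt V s x) s
        = -(2 • (Rc (At g ginv s) x * Mt2 ginv s x * Vt V s x)) := by
      ext a b
      have h1 : dT (fun s => Vt V s x) s a b = CC.tpd (V a) x s := rfl
      have h2 : ∑ l, ∑ m, CC.Ric g ginv a l x s * ginv l m x s * V m x s
          = (Rc (At g ginv s) x * Mt2 ginv s x * Vt V s x) a b := by
        simp only [Matrix.mul_apply, Finset.sum_mul, Rc_eq]
        rw [Finset.sum_comm]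
        rfl
      have h3 := grad_half hΩ (hAs hs') (hHsm hs') (hVm hs') (hDH hs') (hsol hs') hx
        (A_sym hg hs' hx) (hHs hs' x hx) a b
      rw [Sc_eq] at h3
      have h4 : CC.spd a (CC.Scal g ginv) x s = D a (fun y => CC.Scal g ginv y s) x := rfl
      rw [h1, hVev x hx s hs' a, h2,
        lap1_eq hΩ g ginv V s (Rc (At g ginv s))
          (fun y hy q j => by rw [Rc_eq, hsoliton y hy s hs']) hx a, hlap hs' a, h4, h3,
        Matrix.neg_apply, Matrix.smul_apply]
      simp only [nsmul_eq_mul]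
      push_cast
      ring
    have dall : dT (fun s => Mt2 U s x * Mt2 ginv s x * Vt V s x) s = 0 := by
      rw [dT_mul tUH tV, dT_mul tU tH, dU, dV, dT_H hg hx hs]
      noncomm_ring
    have hfun : (fun s => W i x s) = fun s => -(Mt2 U s x * Mt2 ginv s x * Vt V s x) i i :=
      funext hWeq
    rw [hfun]
    refine ⟨(tall i i).neg, ?_⟩
    rw [deriv.fun_neg]
    have := congrFun (congrFun dall i) i
    rw [neg_eq_zero]
    exact this
end
end
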